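/- arXiv:1303.6030 — 2 statements merged into one kernel-verified Lean document; each statement's English description precedes it below -/
import Mathlib

section
/- Suppose char(K) = 0 and S = K[x_1,...,x_n]. Let I ⊆ S and J ⊆ S be homogeneous ideals. Then for a general change of coordinates g ∈ GL_n(K), one has H(I·g(J), d) ≥ H(I^lex · J^oplex, d) for all d ≥ 0. -/
open MvPolynomial TensorProduct CategoryTheory

noncomputable section

/-- The polynomial ring `S = K[x_1,...,x_n]`, standard graded. -/
abbrev PS (K : Type) [Field K] (n : ℕ) : Type := MvPolynomial (Fin n) K

variable (K : Type) [Field K] (n : ℕ)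

/-- An ideal of `S` is homogeneous if it contains all homogeneous components of its
elements. -/
def IsHomog (I : Ideal (PS K n)) : Prop :=
  ∀ f ∈ I, ∀ d : ℕ, MvPolynomial.homogeneousComponent d f ∈ I

/-- The change of coordinates of `S` induced by `g ∈ GL_n(K)`, determined by
`g(x_i) = ∑_j g_{ji} x_j`. -/
def coordChange (g : GL (Fin n) K) : PS K n →ₐ[K] PS K n :=
  MvPolynomial.aeval (fun i => ∑ j, ((g : Matrix (Fin n) (Fin n) K) j i) • MvPolynomial.X j)

/-- A property `P` holds for a general change of coordinates `g ∈ GL_n(K)` if there is a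
nonempty Zariski open subset `U ⊆ GL_n(K)` on which it holds; equivalently (as `GL_n(K)` is
an irreducible variety over the infinite field `K`) there is a nonzero polynomial `F` in the
matrix entries such that `P g` holds whenever `F` does not vanish at `g`. -/
def generally (P : GL (Fin n) K → Prop) : Prop :=
  ∃ F : MvPolynomial (Fin n × Fin n) K, F ≠ 0 ∧
    ∀ g : GL (Fin n) K,
      MvPolynomial.eval (fun p => (g : Matrix (Fin n) (Fin n) K) p.1 p.2) F ≠ 0 → P g

/-- The Hilbert function: `H(I,d) = dim_K I_d`. -/
def hilb (I : Ideal (PS K n)) (d : ℕ) : ℕ :=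
  Module.finrank K ↥(Submodule.restrictScalars K I ⊓ homogeneousSubmodule (Fin n) K d)

/-- `a <_lex b` for the lexicographic order induced by `x_1 > x_2 > ⋯ > x_n`. -/
def lexLt (a b : Fin n →₀ ℕ) : Prop := Finsupp.Lex (· < ·) (· < ·) a b

/-- `a <_oplex b` for the (opposite) lexicographic order induced by `x_n > ⋯ > x_1`. -/
def oplexLt (a b : Fin n →₀ ℕ) : Prop := Finsupp.Lex (· > ·) (· < ·) a b

/-- The total degree of an exponent vector. -/
def expDeg (m : Fin n →₀ ℕ) : ℕ := ∑ i, m i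

/-- A monomial ideal: together with any polynomial it contains each of its monomials. -/
def IsMonomialIdeal (I : Ideal (PS K n)) : Prop :=
  ∀ f ∈ I, ∀ m ∈ f.support, MvPolynomial.monomial m (1 : K) ∈ I

/-- A lex ideal: a monomial ideal whose monomials form a lex set. -/
def IsLexIdeal (I : Ideal (PS K n)) : Prop :=
  IsMonomialIdeal K n I ∧ ∀ u v : Fin n →₀ ℕ, expDeg n u = expDeg n v →
    MvPolynomial.monomial u (1 : K) ∈ I → lexLt n u v →
      MvPolynomial.monomial v (1 : K) ∈ I

/-- An opposite lex ideal: a monomial ideal whose monomials form an opposite lex set. -/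
def IsOplexIdeal (I : Ideal (PS K n)) : Prop :=
  IsMonomialIdeal K n I ∧ ∀ u v : Fin n →₀ ℕ, expDeg n u = expDeg n v →
    MvPolynomial.monomial u (1 : K) ∈ I → oplexLt n u v →
      MvPolynomial.monomial v (1 : K) ∈ I

/-- The initial ideal `in_r(I)` of `I` with respect to a (strict) monomial order `r`:
the ideal generated by the `r`-maximal monomials of the nonzero elements of `I`. -/
def initialIdealO (r : (Fin n →₀ ℕ) → (Fin n →₀ ℕ) → Prop) (I : Ideal (PS K n)) :
    Ideal (PS K n) :=
  Ideal.span {g | ∃ f ∈ I, ∃ m ∈ f.support,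
    (∀ m' ∈ f.support, m' = m ∨ r m' m) ∧ g = MvPolynomial.monomial m (1 : K)}

/-!
The rank of `I · g(J)` in degree `d` is lower semicontinuous in `g`, and a single nonzero polynomial
in the entries of `g` controls all degrees: the initial exponents of the product of `I` with the
image of `J` under a matrix of indeterminates are generated by finitely many, by Dickson's lemma.
So it suffices, for each `d`, to find one `g` for which the products of degree `d` span a space of
dimension at least `H(I^lex · J^oplex, d)`. The same semicontinuity along one-parameter tori allows
`I` and `J` to be replaced by initial ideals, even after further changes of coordinates. Repeatedly
applying transvections and passing to initial ideals strictly increases certain weight counts unless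
the ideal is strongly stable, so `I` may be taken to be strongly stable monomial, and `J` strongly
stable monomial for the opposite order of the variables.

It remains to compare products of monomial ideals. Each monomial of such a product is uniquely the
product of a monomial `u` of `I` with a minimal generator `v` of `J` such that no variable of `u`
comes after one of `v`. For fixed `v` these `u` are the monomials of `I` in an initial segment of
the variables, and by Bigatti's inequality a lex ideal has the fewest of them. Replacing first `I`
by `I^lex`, and then `J` by `J^oplex` in the same way, the Hilbert function of the product does not
grow.
-/

section Exponents

open scoped Pointwise

variable {σ : Type*}

open Classical in
/-- The exponents of degree `a` in a set of exponents, that is, its part of degree `a` when a set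
of exponents is viewed as a set of monomials. -/
def degreePart [Finite σ] (E : Set (σ →₀ ℕ)) (a : ℕ) : Finset (σ →₀ ℕ) :=
  (Finsupp.finite_of_degree_eq a).toFinset.filter (· ∈ E)

@[simp] lemma mem_degreePart [Finite σ] {E : Set (σ →₀ ℕ)} {a : ℕ} {u : σ →₀ ℕ} :
    u ∈ degreePart E a ↔ u ∈ E ∧ u.degree = a := by
  simp [degreePart, and_comm]

lemma degreePart_mono [Finite σ] {E F : Set (σ →₀ ℕ)} (h : E ⊆ F) (a : ℕ) :
    degreePart E a ⊆ degreePart F a := fun _ hu ↦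
  mem_degreePart.mpr ⟨h (mem_degreePart.mp hu).1, (mem_degreePart.mp hu).2⟩

open Classical in
/-- The minimal exponents of degree at most `d` in a set of exponents. If the set is upward closed,
these are the minimal monomial generators of degree at most `d` of the ideal it stands for. -/
def minimalExponents [Finite σ] (F : Set (σ →₀ ℕ)) (d : ℕ) : Finset (σ →₀ ℕ) :=
  (Finsupp.finite_of_degree_le d).toFinset.filter (Minimal (· ∈ F))

@[simp] lemma mem_minimalExponents [Finite σ] {F : Set (σ →₀ ℕ)} {d : ℕ} {v : σ →₀ ℕ} :
    v ∈ minimalExponents F d ↔ Minimal (· ∈ F) v ∧ v.degree ≤ d := by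
  simp [minimalExponents, and_comm]

/-- The exponent of the monomial obtained from `x^u` by replacing `x_q^k` with `x_p^k`. It is only
meaningful for `k ≤ u q`. -/
def transfer (u : σ →₀ ℕ) (q p : σ) (k : ℕ) : σ →₀ ℕ :=
  u - Finsupp.single q k + Finsupp.single p k

lemma transfer_apply [DecidableEq σ] (u : σ →₀ ℕ) (q p : σ) (k : ℕ) (i : σ) :
    transfer u q p k i = u i - (if q = i then k else 0) + if p = i then k else 0 := by
  simp [transfer, Finsupp.single_apply]

lemma transfer_add_single {u : σ →₀ ℕ} {q : σ} {k : ℕ} (p : σ) (h : k ≤ u q) :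
    transfer u q p k + Finsupp.single q k = u + Finsupp.single p k := by
  rw [transfer, add_right_comm, tsub_add_cancel_of_le (Finsupp.single_le_iff.mpr h)]

lemma degree_transfer {u : σ →₀ ℕ} {q : σ} {k : ℕ} (p : σ) (h : k ≤ u q) :
    (transfer u q p k).degree = u.degree := by
  simpa using congrArg Finsupp.degree (transfer_add_single p h)

lemma weight_transfer (W : σ → ℕ) {u : σ →₀ ℕ} {q : σ} {k : ℕ} (p : σ) (h : k ≤ u q) :
    Finsupp.weight W (transfer u q p k) + k * W q = Finsupp.weight W u + k * W p := by
  simpa [Finsupp.weight_single] using congrArg (Finsupp.weight W) (transfer_add_single p h)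

lemma transfer_succ {u : σ →₀ ℕ} {p q : σ} (hpq : p ≠ q) (k : ℕ) :
    transfer u q p (k + 1) = transfer (transfer u q p k) q p 1 := by
  classical
  ext i
  simp only [transfer_apply]
  split_ifs <;> subst_vars <;> first | omega | exact absurd rfl hpq

/-- A set of exponents is strongly stable, with respect to a relation `r` on the variables, if it is
closed under replacing one factor `x_q` of a monomial by some `x_p` with `r p q`. For `r = (· < ·)`
these are the usual strongly stable sets, for `r = (· > ·)` their opposites. -/
def IsStronglyStable (r : σ → σ → Prop) (E : Set (σ →₀ ℕ)) : Prop :=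
  ∀ u ∈ E, ∀ p q, r p q → u q ≠ 0 → transfer u q p 1 ∈ E

lemma IsStronglyStable.transfer_mem {r : σ → σ → Prop} [Std.Irrefl r] {E : Set (σ →₀ ℕ)}
    (hE : IsStronglyStable r E) {p q : σ} (hpq : r p q) {u : σ →₀ ℕ} (hu : u ∈ E) {k : ℕ}
    (hk : k ≤ u q) : transfer u q p k ∈ E := by
  classical
  have hne : p ≠ q := ne_of_irrefl hpq
  induction k with
  | zero => simpa [transfer] using hu
  | succ k ih =>
    rw [transfer_succ hne]
    exact hE _ (ih (by omega)) p q hpq (by simp [transfer_apply, hne]; omega)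

/-- A set of exponents is lex, with respect to an order `r` on the variables, if in each degree it
is closed under passing to lexicographically larger exponents. -/
def IsLexSet (r : σ → σ → Prop) (L : Set (σ →₀ ℕ)) : Prop :=
  ∀ u ∈ L, ∀ v, u.degree = v.degree → Finsupp.Lex r (· < ·) u v → v ∈ L

lemma IsLexSet.isStronglyStable {r : σ → σ → Prop} [IsStrictOrder σ r] {L : Set (σ →₀ ℕ)}
    (hL : IsLexSet r L) : IsStronglyStable r L := by
  classical
  intro u hu p q hpq hq
  refine hL u hu _ (degree_transfer p (Nat.one_le_iff_ne_zero.mpr hq)).symm ⟨p, fun i hi ↦ ?_, ?_⟩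
  · have hiq : q ≠ i := (ne_of_irrefl (_root_.trans hi hpq)).symm
    have hip : p ≠ i := (ne_of_irrefl hi).symm
    simp [transfer_apply, hiq, hip]
  · simp [transfer_apply, (ne_of_irrefl hpq).symm]

lemma exists_lt_of_degree_eq {u v : σ →₀ ℕ} (hd : u.degree = v.degree) (hne : u ≠ v) :
    ∃ j, u j < v j := by
  by_contra! hle
  refine hne (le_antisymm ?_ hle)
  have h := congrArg Finsupp.degree (tsub_add_cancel_of_le (show v ≤ u from hle))
  rw [map_add, hd, Nat.add_eq_right, Finsupp.degree_eq_zero_iff] at h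
  exact tsub_eq_zero_iff_le.mp h

section Factorization

variable [LinearOrder σ]

/-- No variable of `x^u` comes after a variable of `x^v`: the monomial `x^(u+v)` is factored into
its first `u.degree` and its last `v.degree` variables. -/
def Precedes (u v : σ →₀ ℕ) : Prop := ∀ i j, u i ≠ 0 → v j ≠ 0 → i ≤ j

lemma exists_first_variable {v : σ →₀ ℕ} (hv : v ≠ 0) :
    ∃ j, v j ≠ 0 ∧ ∀ k, v k ≠ 0 → j ≤ k := by
  have hne := Finsupp.support_nonempty_iff.mpr hv
  refine ⟨v.support.min' hne, Finsupp.mem_support_iff.mp (Finset.min'_mem _ hne), fun k hk ↦ ?_⟩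
  exact Finset.min'_le _ _ (Finsupp.mem_support_iff.mpr hk)

lemma Precedes.add_single_sub_single {u v : σ →₀ ℕ} (h : Precedes u v) {j : σ}
    (hj : ∀ k, v k ≠ 0 → j ≤ k) : Precedes (u + Finsupp.single j 1) (v - Finsupp.single j 1) := by
  intro i k hi hk
  have hvk : v k ≠ 0 := fun h0 ↦ hk (by simp [h0])
  by_cases hij : j = i
  · exact hij ▸ hj k hvk
  · exact h i k (by simpa [Finsupp.single_apply, hij] using hi) hvk

lemma exists_precedes_add_eq (w : σ →₀ ℕ) {a : ℕ} (ha : a ≤ w.degree) :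
    ∃ u v, u + v = w ∧ Precedes u v ∧ u.degree = a := by
  induction a with
  | zero => exact ⟨0, w, zero_add w, fun i j h ↦ absurd rfl h, map_zero _⟩
  | succ a ih =>
    obtain ⟨u, v, rfl, huv, rfl⟩ := ih (by omega)
    have hv : v ≠ 0 := by rintro rfl; simp at ha
    obtain ⟨j, hj, hmin⟩ := exists_first_variable hv
    refine ⟨_, _, ?_, huv.add_single_sub_single hmin, by simp⟩
    have hle : Finsupp.single j 1 ≤ v := Finsupp.single_le_iff.mpr (Nat.one_le_iff_ne_zero.mpr hj)
    rw [add_assoc, add_tsub_cancel_of_le hle]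

lemma Precedes.le_of_degree_le {u v u' v' : σ →₀ ℕ} (h : Precedes u v) (h' : Precedes u' v')
    (hs : u + v = u' + v') (hd : u.degree ≤ u'.degree) : u ≤ u' := by
  by_contra hnot
  obtain ⟨j, hj⟩ : ∃ j, u' j < u j := by simpa [Finsupp.le_def] using hnot
  obtain ⟨i, hi⟩ : ∃ i, u i < u' i := by
    by_contra! hle
    have heq : u.degree = u'.degree := hd.antisymm (Finsupp.degree_mono hle)
    obtain ⟨i, hi⟩ := exists_lt_of_degree_eq heq (by rintro rfl; exact hj.false)
    exact (hle i).not_gt hi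
  have hsi := DFunLike.congr_fun hs i
  have hsj := DFunLike.congr_fun hs j
  simp only [Finsupp.add_apply] at hsi hsj
  have hij : i = j := le_antisymm (h' i j (by omega) (by omega)) (h j i (by omega) (by omega))
  subst hij
  omega

/-- Exchanging variables between the two factors of `x^(e+f)` sorts them, and stability keeps both
factors in their sets. -/
lemma Precedes.mem_of_add_eq {E F : Set (σ →₀ ℕ)} (hE : IsStronglyStable (· < ·) E)
    (hF : IsStronglyStable (· > ·) F) {u v e f : σ →₀ ℕ} (huv : Precedes u v)
    (hs : e + f = u + v) (hd : e.degree = u.degree) (he : e ∈ E) (hf : f ∈ F) :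
    u ∈ E ∧ v ∈ F := by
  induction hN : (e - u).degree using Nat.strong_induction_on generalizing e f with
  | _ N ih =>
  by_cases hne : e = u
  · subst hne
    exact ⟨he, add_left_cancel hs ▸ hf⟩
  obtain ⟨j, hj⟩ := exists_lt_of_degree_eq hd.symm (Ne.symm hne)
  obtain ⟨i, hi⟩ := exists_lt_of_degree_eq hd hne
  have hsi := DFunLike.congr_fun hs i
  have hsj := DFunLike.congr_fun hs j
  simp only [Finsupp.add_apply] at hsi hsj
  have hij : i < j := lt_of_le_of_ne (huv i j (by omega) (by omega)) (by rintro rfl; omega)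
  have hej : 1 ≤ e j := by omega
  have hfi : 1 ≤ f i := by omega
  have hs' : transfer e j i 1 + transfer f i j 1 = u + v := by
    refine add_right_cancel (b := Finsupp.single j 1 + Finsupp.single i 1) ?_
    rw [add_add_add_comm, transfer_add_single i hej, transfer_add_single j hfi, ← hs,
      add_add_add_comm, add_comm (Finsupp.single i 1)]
  have hsub : transfer e j i 1 - u = e - u - Finsupp.single j 1 := by
    ext k
    simp only [transfer_apply, Finsupp.tsub_apply, Finsupp.single_apply]
    split_ifs <;> subst_vars <;> omega
  refine ih _ ?_ hs' ((degree_transfer i hej).trans hd) (hE e he i j hij (by omega))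
    (hF f hf j i hij (by omega)) rfl
  have hle : Finsupp.single j 1 ≤ e - u := Finsupp.single_le_iff.mpr (by simp; omega)
  have := congrArg Finsupp.degree (tsub_add_cancel_of_le hle)
  rw [map_add, Finsupp.degree_single] at this
  rw [hsub]
  omega

lemma Precedes.eq_of_add_eq {F : Set (σ →₀ ℕ)} {u v u' v' : σ →₀ ℕ} (h : Precedes u v)
    (h' : Precedes u' v') (hv : Minimal (· ∈ F) v) (hv' : Minimal (· ∈ F) v')
    (hs : u + v = u' + v') : v = v' := by
  wlog hd : u.degree ≤ u'.degree generalizing u v u' v'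
  · exact (this h' h hv' hv hs.symm (le_of_not_ge hd)).symm
  have hle : v' ≤ v := fun i ↦ by
    have hui := h.le_of_degree_le h' hs hd i
    have hsi := DFunLike.congr_fun hs i
    simp only [Finsupp.add_apply] at hsi
    omega
  exact le_antisymm (hv.2 hv'.1 hle) hle

lemma IsStronglyStable.sub_single_mem {F : Set (σ →₀ ℕ)} (hF : IsStronglyStable (· > ·) F)
    (hFu : IsUpperSet F) {v v' : σ →₀ ℕ} (hv' : v' ∈ F) (hlt : v' < v) {j : σ} (hj : v j ≠ 0)
    (hmin : ∀ k, v k ≠ 0 → j ≤ k) : v - Finsupp.single j 1 ∈ F := by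
  obtain ⟨k, hk⟩ : ∃ k, v' k < v k := by simpa [Finsupp.le_def] using hlt.not_ge
  have hvk : v - Finsupp.single k 1 ∈ F := by
    refine hFu (fun i ↦ ?_) hv'
    have : v' i ≤ v i := hlt.le i
    simp only [Finsupp.tsub_apply, Finsupp.single_apply]
    split_ifs <;> subst_vars <;> omega
  rcases (hmin k (by omega)).eq_or_lt with rfl | hjk
  · exact hvk
  have heq : v - Finsupp.single j 1 = transfer (v - Finsupp.single k 1) j k 1 := by
    ext i
    simp only [transfer_apply, Finsupp.tsub_apply, Finsupp.single_apply]
    split_ifs <;> subst_vars <;> first | omega | exact absurd hjk (lt_irrefl _)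
  exact heq ▸ hF _ hvk k j hjk (by simpa [Finsupp.single_apply, hjk.ne'] using hj)

/-- Among all factorizations `w = u + v` the one with `v` of least degree has `v` minimal. -/
lemma exists_precedes_minimal {E F : Set (σ →₀ ℕ)} (hE : IsStronglyStable (· < ·) E)
    (hEu : IsUpperSet E) (hF : IsStronglyStable (· > ·) F) (hFu : IsUpperSet F) {w : σ →₀ ℕ}
    (hw : w ∈ E + F) : ∃ u ∈ E, ∃ v, Minimal (· ∈ F) v ∧ Precedes u v ∧ u + v = w := by
  classical
  have hex : ∃ N, ∃ u ∈ E, ∃ v ∈ F, Precedes u v ∧ u + v = w ∧ v.degree = N := by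
    obtain ⟨e, he, f, hf, rfl⟩ := hw
    obtain ⟨u, v, hs, huv, hd⟩ :=
      exists_precedes_add_eq (e + f) (Finsupp.degree_mono (le_add_right le_rfl) : e.degree ≤ _)
    obtain ⟨hu, hv⟩ := huv.mem_of_add_eq hE hF hs.symm hd.symm he hf
    exact ⟨_, u, hu, v, hv, huv, hs, rfl⟩
  obtain ⟨u, hu, v, hv, huv, rfl, hN⟩ := Nat.find_spec hex
  refine ⟨u, hu, v, ⟨hv, fun v' hv' hle ↦ ?_⟩, huv, rfl⟩
  by_contra hnot
  obtain ⟨j, hj, hmin⟩ := exists_first_variable (v := v) (by rintro rfl; exact hnot zero_le)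
  have hvj := hF.sub_single_mem hFu hv' (lt_of_le_not_ge hle hnot) hj hmin
  have hjle : Finsupp.single j 1 ≤ v := Finsupp.single_le_iff.mpr (by omega)
  refine Nat.find_min hex (m := (v - Finsupp.single j 1).degree) ?_
    ⟨_, hEu (le_add_right le_rfl) hu, _, hvj, huv.add_single_sub_single hmin, ?_, rfl⟩
  · have := congrArg Finsupp.degree (tsub_add_cancel_of_le hjle)
    rw [map_add, Finsupp.degree_single] at this
    omega
  · rw [add_assoc, add_tsub_cancel_of_le hjle]

lemma card_degreePart_add [Finite σ] {E F : Set (σ →₀ ℕ)} (hE : IsStronglyStable (· < ·) E)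
    (hEu : IsUpperSet E) (hF : IsStronglyStable (· > ·) F) (hFu : IsUpperSet F) (d : ℕ) :
    (degreePart (E + F) d).card = ∑ v ∈ minimalExponents F d,
      (degreePart (E ∩ {u | Precedes u v}) (d - v.degree)).card := by
  rw [← Finset.card_sigma]
  symm
  refine Finset.card_nbij (fun x ↦ x.2 + x.1) ?_ ?_ ?_
  · rintro ⟨v, u⟩ hx
    simp only [SetLike.mem_coe, Finset.mem_sigma, mem_minimalExponents, mem_degreePart] at hx
    obtain ⟨⟨hv, hvd⟩, ⟨hu, -⟩, hud⟩ := hx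
    rw [SetLike.mem_coe, mem_degreePart, map_add]
    exact ⟨Set.add_mem_add hu hv.prop, by dsimp only; omega⟩
  · rintro ⟨v, u⟩ hx ⟨v', u'⟩ hx' heq
    simp only [SetLike.mem_coe, Finset.mem_sigma, mem_minimalExponents, mem_degreePart] at hx hx'
    obtain rfl : v = v' := hx.2.1.2.eq_of_add_eq hx'.2.1.2 hx.1.1 hx'.1.1 heq
    exact congrArg (Sigma.mk v) (add_right_cancel heq)
  · intro w hw
    obtain ⟨hw, hwd⟩ := mem_degreePart.mp hw
    obtain ⟨u, hu, v, hv, huv, rfl⟩ := exists_precedes_minimal hE hEu hF hFu hw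
    rw [map_add] at hwd
    refine ⟨⟨v, u⟩, ?_, rfl⟩
    simp only [SetLike.mem_coe, Finset.mem_sigma, mem_minimalExponents, mem_degreePart]
    exact ⟨⟨hv, by omega⟩, ⟨hu, huv⟩, by omega⟩

end Factorization

/-- The colon by a variable `x_i`, in terms of exponents. -/
def colonVariable (E : Set (σ →₀ ℕ)) (i : σ) : Set (σ →₀ ℕ) := {u | u + Finsupp.single i 1 ∈ E}

lemma IsStronglyStable.colon {r : σ → σ → Prop} {E : Set (σ →₀ ℕ)}
    (hE : IsStronglyStable r E) (i : σ) : IsStronglyStable r (colonVariable E i) := by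
  intro u hu p q hpq hq
  have h := hE _ hu p q hpq (by simp [hq])
  have heq : transfer (u + Finsupp.single i 1) q p 1 = transfer u q p 1 + Finsupp.single i 1 := by
    refine add_right_cancel (b := Finsupp.single q 1) ?_
    rw [transfer_add_single p (by simp; omega), add_right_comm (transfer u q p 1),
      transfer_add_single p (by omega), add_right_comm]
  rwa [heq] at h

lemma IsLexSet.colon {r : σ → σ → Prop} {L : Set (σ →₀ ℕ)} (hL : IsLexSet r L) (i : σ) :
    IsLexSet r (colonVariable L i) := by
  rintro u hu v hd ⟨x, hxeq, hx⟩
  refine hL _ hu _ (by simp [hd]) ⟨x, fun y hy ↦ ?_, ?_⟩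
  · simp [hxeq y hy]
  · simpa using hx

lemma exists_lt_index_of_toLex_lt [LinearOrder σ] {i : σ} {u v : σ →₀ ℕ} (hu : ∀ j, i < j → u j = 0)
    (hv : ∀ j, i < j → v j = 0) (hd : u.degree = v.degree) (hlt : toLex u < toLex v) :
    ∃ x < i, (∀ y < x, u y = v y) ∧ u x < v x := by
  obtain ⟨x, hxeq, hx⟩ := hlt
  change ∀ y < x, u y = v y at hxeq
  change u x < v x at hx
  refine ⟨x, lt_of_not_ge fun hix ↦ ?_, hxeq, hx⟩
  obtain ⟨y, hy⟩ := exists_lt_of_degree_eq hd.symm (by rintro rfl; exact hx.false)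
  rcases lt_or_ge y x with h | h
  · exact hy.ne (hxeq y h).symm
  · rcases (hix.trans h).eq_or_lt with rfl | h'
    · obtain rfl := le_antisymm h hix
      exact lt_asymm hx hy
    · rw [hu y h', hv y h'] at hy
      exact hy.false

lemma exists_upper_subset_card_eq {α β : Type*} [LinearOrder β] {f : α → β}
    (S : Finset α) {s : ℕ} (hs : s ≤ S.card) :
    ∃ T ⊆ S, T.card = s ∧ ∀ x ∈ T, ∀ y ∈ S, f x < f y → y ∈ T := by
  classical
  induction S using Finset.induction_on_min_value f with
  | empty => exact ⟨∅, subset_rfl, by simpa [eq_comm] using hs, by simp⟩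
  | insert m S hm hmin ih =>
    rw [Finset.card_insert_of_notMem hm] at hs
    rcases hs.eq_or_lt with rfl | hs
    · exact ⟨_, subset_rfl, Finset.card_insert_of_notMem hm, fun _ _ _ hy _ ↦ hy⟩
    obtain ⟨T, hTS, hT, hup⟩ := ih (by omega)
    refine ⟨T, hTS.trans (Finset.subset_insert _ _), hT, fun x hx y hy hxy ↦ ?_⟩
    rcases Finset.mem_insert.mp hy with rfl | hy
    · exact absurd hxy (hmin x (hTS hx)).not_gt
    · exact hup x hx y hy hxy

section Bigatti

variable [Finite σ] [LinearOrder σ]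

open Classical in
/-- The exponents of degree `a` in a set of exponents that involve only variables up to `x_i`. -/
def initialPart (E : Set (σ →₀ ℕ)) (i : σ) (a : ℕ) : Finset (σ →₀ ℕ) :=
  degreePart (E ∩ {u | ∀ j, i < j → u j = 0}) a

@[simp] lemma mem_initialPart {E : Set (σ →₀ ℕ)} {i : σ} {a : ℕ} {u : σ →₀ ℕ} :
    u ∈ initialPart E i a ↔ u ∈ E ∧ (∀ j, i < j → u j = 0) ∧ u.degree = a := by
  simp [initialPart, and_assoc]

lemma initialPart_mono {E F : Set (σ →₀ ℕ)} (h : E ⊆ F) (i : σ) (a : ℕ) :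
    initialPart E i a ⊆ initialPart F i a :=
  degreePart_mono (Set.inter_subset_inter_left _ h) a

lemma IsLexSet.exists_subset_card_eq {L : Set (σ →₀ ℕ)} (hL : IsLexSet (· < ·) L) (i : σ) (a : ℕ)
    {s : ℕ} (hs : s ≤ (initialPart L i a).card) :
    ∃ L' ⊆ L, IsLexSet (· < ·) L' ∧ (initialPart L' i a).card = s := by
  obtain ⟨T, hTL, rfl, hup⟩ := exists_upper_subset_card_eq (f := toLex) (initialPart L i a) hs
  refine ⟨{v | ∃ u ∈ T, u.degree = v.degree ∧ toLex u ≤ toLex v}, ?_, ?_, ?_⟩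
  · rintro v ⟨u, hu, hd, huv⟩
    have huL := (mem_initialPart.mp (hTL hu)).1
    rcases huv.eq_or_lt with h | h
    · exact toLex.injective h ▸ huL
    · exact hL u huL v hd h
  · rintro v ⟨u, hu, hd, huv⟩ w hd' hvw
    exact ⟨u, hu, hd.trans hd', huv.trans (le_of_lt (show toLex v < toLex w from hvw))⟩
  · congr 1
    ext v
    rw [mem_initialPart]
    refine ⟨?_, fun hv ↦ ⟨⟨v, hv, rfl, le_rfl⟩, (mem_initialPart.mp (hTL hv)).2⟩⟩
    rintro ⟨⟨u, hu, hd, huv⟩, hv⟩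
    rcases huv.eq_or_lt with h | h
    · exact toLex.injective h ▸ hu
    · have huL := (mem_initialPart.mp (hTL hu)).1
      exact hup u hu v (mem_initialPart.mpr ⟨hL u huL v hd h, hv⟩) h

/-- The exponents `u` in the variables up to `x_j` that become `v` on substituting `x_j := x_i`
are determined by `u j`, which ranges over `0, ..., v i`. -/
lemma card_filter_transfer_eq {i j : σ} (hij : i < j) {a : ℕ} {v : σ →₀ ℕ}
    (hv : v ∈ initialPart Set.univ i a) :
    ((initialPart Set.univ j a).filter fun u ↦ transfer u j i (u j) = v).card = v i + 1 := by
  obtain ⟨-, hvi, hva⟩ := mem_initialPart.mp hv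
  have hne := hij.ne
  have hvj : v j = 0 := hvi j hij
  rw [← Finset.card_range (v i + 1)]
  refine Finset.card_nbij' (fun u ↦ u j) (fun k ↦ transfer v i j k) ?_ ?_ ?_ ?_
  · intro u hu
    have := DFunLike.congr_fun (Finset.mem_filter.mp hu).2 i
    simp only [transfer_apply, if_neg hne.symm, if_true] at this
    simp only [SetLike.mem_coe, Finset.mem_range]
    omega
  · intro k hk
    have hk : k ≤ v i := Nat.lt_succ_iff.mp (Finset.mem_range.mp hk)
    refine Finset.mem_filter.mpr ⟨mem_initialPart.mpr
      ⟨trivial, fun x hx ↦ ?_, (degree_transfer j hk).trans hva⟩, ?_⟩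
    · simp [transfer_apply, hx.ne, (hij.trans hx).ne, hvi x (hij.trans hx)]
    · ext x
      simp only [transfer_apply, hvj]
      split_ifs <;> subst_vars <;> omega
  · intro u hu
    obtain rfl := (Finset.mem_filter.mp hu).2
    ext x
    simp only [transfer_apply]
    split_ifs <;> subst_vars <;> omega
  · intro k _
    simp [transfer_apply, hne, hvj]

lemma card_filter_transfer_mem {i j : σ} (hij : i < j) (a : ℕ) (E : Set (σ →₀ ℕ)) :
    ((initialPart Set.univ j a).filter
      fun u ↦ transfer u j i (u j) ∈ initialPart E i a).card =
      ∑ v ∈ initialPart E i a, (v i + 1) := by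
  refine (Finset.card_eq_sum_card_fiberwise (f := fun u ↦ transfer u j i (u j))
    (t := initialPart E i a) fun u hu ↦ (Finset.mem_filter.mp hu).2).trans
    (Finset.sum_congr rfl fun v hv ↦ ?_)
  rw [← card_filter_transfer_eq hij (initialPart_mono (Set.subset_univ E) i a hv),
    Finset.filter_filter]
  congr 1
  refine Finset.filter_congr fun u _ ↦ ⟨And.right, fun h ↦ ⟨?_, h⟩⟩
  simpa only [Finset.mem_coe, h] using hv

lemma IsStronglyStable.card_initialPart_le_sum {E : Set (σ →₀ ℕ)}
    (hE : IsStronglyStable (· < ·) E) {i j : σ} (hij : i ⋖ j) (a : ℕ) :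
    (initialPart E j a).card ≤ ∑ v ∈ initialPart E i a, (v i + 1) := by
  rw [← card_filter_transfer_mem hij.lt]
  refine Finset.card_le_card fun u hu ↦ ?_
  obtain ⟨huE, huj, hua⟩ := mem_initialPart.mp hu
  refine Finset.mem_filter.mpr ⟨mem_initialPart.mpr ⟨trivial, huj, hua⟩, mem_initialPart.mpr
    ⟨hE.transfer_mem hij.lt huE le_rfl, fun x hx ↦ ?_, (degree_transfer i le_rfl).trans hua⟩⟩
  rcases (hij.ge_of_gt hx).eq_or_lt with rfl | hjx
  · simp [transfer_apply, hx.ne]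
  · simp [transfer_apply, hx.ne, hjx.ne, huj x hjx]

lemma IsLexSet.sum_lt_card_initialPart {L L' : Set (σ →₀ ℕ)} (hL : IsLexSet (· < ·) L)
    (hL' : IsLexSet (· < ·) L') {i j : σ} (hij : i < j) {a : ℕ} {l : σ →₀ ℕ}
    (hl : l ∈ initialPart L i a) (hl' : l ∉ L') :
    ∑ v ∈ initialPart L' i a, (v i + 1) < (initialPart L j a).card := by
  obtain ⟨hlL, hli, hla⟩ := mem_initialPart.mp hl
  rw [← card_filter_transfer_mem hij]
  refine Finset.card_lt_card ((Finset.ssubset_iff_of_subset fun u hu ↦ ?_).mpr ⟨l, ?_, fun h ↦ ?_⟩)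
  · obtain ⟨hu, hv⟩ := Finset.mem_filter.mp hu
    obtain ⟨-, huj, hua⟩ := mem_initialPart.mp hu
    obtain ⟨hvL', hvi, hva⟩ := mem_initialPart.mp hv
    have hlv : toLex l < toLex (transfer u j i (u j)) := by
      rcases lt_trichotomy (toLex l) (toLex (transfer u j i (u j))) with h | h | h
      · exact h
      · exact absurd (toLex.injective h ▸ hvL') hl'
      · exact absurd (hL' _ hvL' l (hva.trans hla.symm) h) hl'
    obtain ⟨x, hxi, hxeq, hx⟩ := exists_lt_index_of_toLex_lt hli hvi (hla.trans hva.symm) hlv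
    have hfix : ∀ y < i, transfer u j i (u j) y = u y := fun y hy ↦ by
      simp [transfer_apply, hy.ne', (hy.trans hij).ne']
    refine mem_initialPart.mpr ⟨hL l hlL u (hla.trans hua.symm) ⟨x, fun y hy ↦ ?_, ?_⟩, huj, hua⟩
    · exact (hxeq y hy).trans (hfix y (hy.trans hxi))
    · exact hx.trans_eq (hfix x hxi)
  · exact mem_initialPart.mpr ⟨hlL, fun x hx ↦ hli x (hij.trans hx), hla⟩
  · have hmem := (mem_initialPart.mp (Finset.mem_filter.mp h).2).1
    rw [hli j hij] at hmem
    exact hl' (by simpa [transfer] using hmem)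

/-- If `L` had more exponents up to `x_i` than `E`, then truncating it to as many as `E` has and
summing the numbers of exponents up to `x_j` above each of them would give more for `L` also. -/
lemma card_initialPart_le_of_covBy {E L : Set (σ →₀ ℕ)} (hE : IsStronglyStable (· < ·) E)
    (hL : IsLexSet (· < ·) L) {i j : σ} (hij : i ⋖ j) {a : ℕ}
    (hsum : ∀ L', IsLexSet (· < ·) L' → (initialPart E i a).card ≤ (initialPart L' i a).card →
      ∑ u ∈ initialPart E i a, u i ≤ ∑ u ∈ initialPart L' i a, u i)
    (hcard : (initialPart L j a).card ≤ (initialPart E j a).card) :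
    (initialPart L i a).card ≤ (initialPart E i a).card := by
  by_contra! hlt
  obtain ⟨L', -, hL', hcard'⟩ := hL.exists_subset_card_eq i a hlt.le
  obtain ⟨l, hl, hl'⟩ := Finset.exists_mem_notMem_of_card_lt_card (hcard'.trans_lt hlt)
  have hnot : l ∉ L' := fun h ↦ hl' (mem_initialPart.mpr ⟨h, (mem_initialPart.mp hl).2⟩)
  refine hcard.not_gt ?_
  calc (initialPart E j a).card
      ≤ ∑ v ∈ initialPart E i a, (v i + 1) := hE.card_initialPart_le_sum hij a
    _ ≤ ∑ v ∈ initialPart L' i a, (v i + 1) := by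
        simp only [Finset.sum_add_distrib, ← Finset.card_eq_sum_ones]
        exact add_le_add (hsum L' hL' hcard'.ge) hcard'.ge
    _ < (initialPart L j a).card := hL.sum_lt_card_initialPart hL' hij.lt hl hnot

lemma filter_initialPart_ne_zero (E : Set (σ →₀ ℕ)) (i : σ) (a : ℕ) :
    (initialPart E i (a + 1)).filter (fun u ↦ ¬ u i = 0) =
      (initialPart (colonVariable E i) i a).map (addRightEmbedding (Finsupp.single i 1)) := by
  ext u
  simp only [Finset.mem_filter, mem_initialPart, Finset.mem_map, addRightEmbedding_apply]
  constructor
  · rintro ⟨⟨huE, hui, hua⟩, hu0⟩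
    have hadd : u - Finsupp.single i 1 + Finsupp.single i 1 = u :=
      tsub_add_cancel_of_le (Finsupp.single_le_iff.mpr (Nat.one_le_iff_ne_zero.mpr hu0))
    refine ⟨u - Finsupp.single i 1, ⟨?_, fun j hj ↦ by simp [hui j hj], ?_⟩, hadd⟩
    · change u - Finsupp.single i 1 + Finsupp.single i 1 ∈ E
      rwa [hadd]
    · have := congrArg Finsupp.degree hadd
      rw [map_add, Finsupp.degree_single] at this
      omega
  · rintro ⟨v, ⟨hvE, hvi, rfl⟩, rfl⟩
    exact ⟨⟨hvE, fun j hj ↦ by simp [hvi j hj, hj.ne], by simp⟩, by simp⟩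

lemma card_filter_add_card_colonVariable (E : Set (σ →₀ ℕ)) (i : σ) (a : ℕ) :
    ((initialPart E i (a + 1)).filter fun u ↦ u i = 0).card +
      (initialPart (colonVariable E i) i a).card = (initialPart E i (a + 1)).card := by
  rw [← Finset.card_filter_add_card_filter_not (s := initialPart E i (a + 1)) fun u ↦ u i = 0,
    filter_initialPart_ne_zero, Finset.card_map]

lemma sum_initialPart_succ (E : Set (σ →₀ ℕ)) (i : σ) (a : ℕ) :
    ∑ u ∈ initialPart E i (a + 1), u i = ∑ u ∈ initialPart (colonVariable E i) i a, (u i + 1) := by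
  rw [← Finset.sum_filter_of_ne (p := fun u : σ →₀ ℕ ↦ ¬ u i = 0) fun _ _ h ↦ h,
    filter_initialPart_ne_zero, Finset.sum_map]
  simp

lemma sum_initialPart_le_of_card_filter_le {i : σ}
    (hfilter : ∀ a E L, IsStronglyStable (· < ·) E → IsLexSet (· < ·) L →
      (initialPart L i (a + 1)).card ≤ (initialPart E i (a + 1)).card →
      ((initialPart L i (a + 1)).filter fun u ↦ u i = 0).card ≤
        ((initialPart E i (a + 1)).filter fun u ↦ u i = 0).card)
    (a : ℕ) {E L : Set (σ →₀ ℕ)} (hE : IsStronglyStable (· < ·) E) (hL : IsLexSet (· < ·) L)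
    (hcard : (initialPart E i a).card ≤ (initialPart L i a).card) :
    ∑ u ∈ initialPart E i a, u i ≤ ∑ u ∈ initialPart L i a, u i := by
  induction a generalizing E L with
  | zero =>
    refine (Finset.sum_eq_zero fun u hu ↦ ?_).trans_le (zero_le)
    rw [Finsupp.degree_eq_zero_iff _ |>.mp (mem_initialPart.mp hu).2.2, Finsupp.zero_apply]
  | succ a ih =>
    obtain ⟨L', hsub, hL', hcard'⟩ := hL.exists_subset_card_eq i (a + 1) hcard
    refine le_trans ?_ (Finset.sum_le_sum_of_subset (initialPart_mono hsub i (a + 1)))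
    have hcolon : (initialPart (colonVariable E i) i a).card ≤
        (initialPart (colonVariable L' i) i a).card := by
      have := hfilter a E L' hE hL' hcard'.le
      have := card_filter_add_card_colonVariable E i a
      have := card_filter_add_card_colonVariable L' i a
      omega
    simp only [sum_initialPart_succ, Finset.sum_add_distrib, ← Finset.card_eq_sum_ones]
    exact add_le_add (ih (hE.colon i) (hL'.colon i) hcolon) hcolon

lemma filter_initialPart_eq_zero_of_covBy (E : Set (σ →₀ ℕ)) {i j : σ} (hij : i ⋖ j) (a : ℕ) :
    (initialPart E j a).filter (fun u ↦ u j = 0) = initialPart E i a := by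
  ext u
  simp only [Finset.mem_filter, mem_initialPart]
  constructor
  · rintro ⟨⟨huE, huj, hua⟩, hu0⟩
    refine ⟨huE, fun x hx ↦ ?_, hua⟩
    rcases (hij.ge_of_gt hx).eq_or_lt with rfl | hjx
    exacts [hu0, huj x hjx]
  · rintro ⟨huE, hui, hua⟩
    exact ⟨⟨huE, fun x hx ↦ hui x (hij.lt.trans hx), hua⟩, hui j hij.lt⟩

lemma filter_initialPart_eq_empty_of_isMin (E : Set (σ →₀ ℕ)) {i : σ} (hi : IsMin i) (a : ℕ) :
    (initialPart E i (a + 1)).filter (fun u ↦ u i = 0) = ∅ := by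
  refine Finset.filter_eq_empty_iff.mpr fun u hu hui ↦ ?_
  obtain ⟨-, hu, hd⟩ := mem_initialPart.mp hu
  have h0 : u = 0 := Finsupp.ext fun j ↦ by
    rcases lt_trichotomy i j with h | rfl | h
    exacts [hu j h, hui, absurd h hi.not_lt]
  simp [h0] at hd

lemma sum_initialPart_le (i : σ) (a : ℕ) {E L : Set (σ →₀ ℕ)} (hE : IsStronglyStable (· < ·) E)
    (hL : IsLexSet (· < ·) L) (hcard : (initialPart E i a).card ≤ (initialPart L i a).card) :
    ∑ u ∈ initialPart E i a, u i ≤ ∑ u ∈ initialPart L i a, u i := by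
  induction i using WellFoundedLT.induction generalizing a E L with
  | _ j ih =>
  refine sum_initialPart_le_of_card_filter_le (fun b E L hE hL hc ↦ ?_) a hE hL hcard
  by_cases hj : IsMin j
  · simp [filter_initialPart_eq_empty_of_isMin _ hj]
  · obtain ⟨i, hij⟩ := exists_covBy_of_wellFoundedGT hj
    simp only [filter_initialPart_eq_zero_of_covBy _ hij]
    exact card_initialPart_le_of_covBy hE hL hij (fun _ hL' ↦ ih i hij.lt _ hE hL') hc

lemma card_initialPart_le_of_card_degreePart_le {E L : Set (σ →₀ ℕ)}
    (hE : IsStronglyStable (· < ·) E) (hL : IsLexSet (· < ·) L) {a : ℕ}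
    (hcard : (degreePart L a).card ≤ (degreePart E a).card) (i : σ) :
    (initialPart L i a).card ≤ (initialPart E i a).card := by
  induction i using WellFoundedGT.induction with
  | _ i ih =>
  by_cases hi : IsMax i
  · have heq : ∀ X : Set (σ →₀ ℕ), initialPart X i a = degreePart X a := fun X ↦ by
      ext u
      simp [show ∀ j, ¬ i < j from fun _ ↦ hi.not_lt]
    rwa [heq, heq]
  · obtain ⟨j, hij⟩ := exists_covBy_of_wellFoundedLT hi
    exact card_initialPart_le_of_covBy hE hL hij
      (fun _ hL' ↦ sum_initialPart_le i a hE hL') (ih j hij.lt)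

end Bigatti

section Products

variable [Finite σ] [LinearOrder σ]

lemma card_degreePart_precedes_le {E L : Set (σ →₀ ℕ)} (hE : IsStronglyStable (· < ·) E)
    (hL : IsLexSet (· < ·) L) {a : ℕ} (hcard : (degreePart L a).card ≤ (degreePart E a).card)
    (v : σ →₀ ℕ) : (degreePart (L ∩ {u | Precedes u v}) a).card ≤
      (degreePart (E ∩ {u | Precedes u v}) a).card := by
  by_cases hv : v = 0
  · have hall : {u : σ →₀ ℕ | Precedes u v} = Set.univ :=
      Set.eq_univ_of_forall fun u i j _ h ↦ absurd (by simp [hv]) h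
    simpa [hall] using hcard
  · obtain ⟨j, hj, hmin⟩ := exists_first_variable hv
    have hset : {u : σ →₀ ℕ | Precedes u v} = {u | ∀ i, j < i → u i = 0} := by
      ext u
      refine ⟨fun h i hi ↦ ?_, fun h i k hi hk ↦ (le_of_not_gt fun hji ↦ hi (h i hji)).trans
        (hmin k hk)⟩
      by_contra hui
      exact hi.not_ge (h i j hui hj)
    rw [hset]
    exact card_initialPart_le_of_card_degreePart_le hE hL hcard j

lemma card_degreePart_lex_add_le {E F L : Set (σ →₀ ℕ)} (hE : IsStronglyStable (· < ·) E)
    (hEu : IsUpperSet E) (hF : IsStronglyStable (· > ·) F) (hFu : IsUpperSet F)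
    (hL : IsLexSet (· < ·) L) (hLu : IsUpperSet L) {d : ℕ}
    (hcard : ∀ a ≤ d, (degreePart L a).card ≤ (degreePart E a).card) :
    (degreePart (L + F) d).card ≤ (degreePart (E + F) d).card := by
  rw [card_degreePart_add hE hEu hF hFu, card_degreePart_add hL.isStronglyStable hLu hF hFu]
  exact Finset.sum_le_sum fun v _ ↦
    card_degreePart_precedes_le hE hL (hcard _ (Nat.sub_le d _)) v

lemma card_degreePart_lex_add_oplex_le {E F L M : Set (σ →₀ ℕ)}
    (hE : IsStronglyStable (· < ·) E) (hEu : IsUpperSet E)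
    (hF : IsStronglyStable (· > ·) F) (hFu : IsUpperSet F)
    (hL : IsLexSet (· < ·) L) (hLu : IsUpperSet L) (hM : IsLexSet (· > ·) M) (hMu : IsUpperSet M)
    {d : ℕ} (hLE : ∀ a ≤ d, (degreePart L a).card ≤ (degreePart E a).card)
    (hMF : ∀ a ≤ d, (degreePart M a).card ≤ (degreePart F a).card) :
    (degreePart (L + M) d).card ≤ (degreePart (E + F) d).card := by
  have hop : (degreePart (M + E) d).card ≤ (degreePart (F + E) d).card :=
    card_degreePart_lex_add_le (σ := σᵒᵈ) hF hFu hE hEu hM hMu hMF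
  calc (degreePart (L + M) d).card
      ≤ (degreePart (E + M) d).card :=
        card_degreePart_lex_add_le hE hEu hM.isStronglyStable hMu hL hLu hLE
    _ ≤ (degreePart (E + F) d).card := by rwa [add_comm E M, add_comm E F]

end Products

end Exponents

section GradedPieces

variable {σ R : Type*} [CommRing R]

lemma degree_eq_of_mem_support {d : ℕ} {f : MvPolynomial σ R} (hf : f.IsHomogeneous d)
    {m : σ →₀ ℕ} (hm : m ∈ f.support) : m.degree = d :=
  of_not_not fun h ↦ mem_support_iff.mp hm (hf.coeff_eq_zero h)

/-- The homogeneous elements of degree `d` of an ideal. -/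
def gradedPiece (I : Ideal (MvPolynomial σ R)) (d : ℕ) : Submodule R (MvPolynomial σ R) :=
  Submodule.restrictScalars R I ⊓ homogeneousSubmodule σ R d

lemma mem_gradedPiece {I : Ideal (MvPolynomial σ R)} {d : ℕ} {f : MvPolynomial σ R} :
    f ∈ gradedPiece I d ↔ f ∈ I ∧ f.IsHomogeneous d := Iff.rfl

lemma mul_monomial_mem_gradedPiece {I : Ideal (MvPolynomial σ R)} {d : ℕ} {f : MvPolynomial σ R}
    (hf : f ∈ gradedPiece I d) (u : σ →₀ ℕ) : f * monomial u 1 ∈ gradedPiece I (d + u.degree) :=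
  mem_gradedPiece.mpr ⟨I.mul_mem_right _ (mem_gradedPiece.mp hf).1,
    (mem_gradedPiece.mp hf).2.mul (isHomogeneous_monomial 1 rfl)⟩

lemma map_mem_gradedPiece {S : Type*} [CommRing S] (ε : R →+* S) {I : Ideal (MvPolynomial σ R)}
    {d : ℕ} {f : MvPolynomial σ R} (hf : f ∈ gradedPiece I d) :
    map ε f ∈ gradedPiece (I.map (map ε)) d :=
  mem_gradedPiece.mpr ⟨Ideal.mem_map_of_mem _ (mem_gradedPiece.mp hf).1,
    (mem_gradedPiece.mp hf).2.map ε⟩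

lemma finite_gradedPiece [Finite σ] [IsNoetherianRing R] (I : Ideal (MvPolynomial σ R)) (d : ℕ) :
    Module.Finite R (gradedPiece I d) :=
  have := Module.Finite.iff_fg.mpr (homogeneousSubmodule_fg (σ := σ) (R := R) d)
  Module.Finite.of_injective _ (Submodule.inclusion_injective
    (inf_le_right : gradedPiece I d ≤ homogeneousSubmodule σ R d))

end GradedPieces

section LeadingExponents

variable {σ R Γ : Type*} [CommRing R] [AddCommMonoid Γ] [LinearOrder Γ] {w : (σ →₀ ℕ) →+ Γ}

/-- `m` is the leading exponent of `f` with respect to `w`: every other exponent of `f` has strictly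
smaller value under `w`. The map `w` stands for a monomial order, or for a weight that need not
separate all monomials. -/
def IsLeadingExponent (w : (σ →₀ ℕ) →+ Γ) (m : σ →₀ ℕ) (f : MvPolynomial σ R) : Prop :=
  coeff m f ≠ 0 ∧ ∀ m' ∈ f.support, m' = m ∨ w m' < w m

lemma isLeadingExponent_monomial [Nontrivial R] (w : (σ →₀ ℕ) →+ Γ) (m : σ →₀ ℕ) :
    IsLeadingExponent w m (monomial m (1 : R)) :=
  ⟨by classical simp, fun _ h ↦ .inl (Finset.mem_singleton.mp (support_monomial_subset h))⟩

lemma IsLeadingExponent.mul_monomial [IsOrderedCancelAddMonoid Γ] {m : σ →₀ ℕ}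
    {f : MvPolynomial σ R} (hf : IsLeadingExponent w m f) (u : σ →₀ ℕ) :
    IsLeadingExponent w (m + u) (f * monomial u 1) := by
  classical
  refine ⟨by simpa using hf.1, fun m' hm' ↦ ?_⟩
  obtain ⟨v, hv, u', hu', rfl⟩ := Finset.mem_add.mp (support_mul _ _ hm')
  obtain rfl := Finset.mem_singleton.mp (support_monomial_subset hu')
  refine (hf.2 v hv).imp (congrArg (· + u')) fun h ↦ ?_
  simpa only [map_add] using add_lt_add_left h (w u')

lemma IsLeadingExponent.map {S : Type*} [CommRing S] (ε : R →+* S) {m : σ →₀ ℕ}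
    {f : MvPolynomial σ R} (hf : IsLeadingExponent w m f) (hε : ε (coeff m f) ≠ 0) :
    IsLeadingExponent w m (MvPolynomial.map ε f) :=
  ⟨by rwa [coeff_map], fun v hv ↦ hf.2 v (support_map_subset _ _ hv)⟩

lemma exists_isLeadingExponent {f : MvPolynomial σ R} (hw : Set.InjOn w f.support)
    {m : σ →₀ ℕ} (hm : m ∈ f.support) : ∃ m', IsLeadingExponent w m' f ∧ (m = m' ∨ w m < w m') := by
  obtain ⟨m', hm', hmax⟩ := f.support.exists_max_image w ⟨m, hm⟩
  have hlt : ∀ v ∈ f.support, v = m' ∨ w v < w m' := fun v hv ↦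
    (hmax v hv).eq_or_lt.imp_left (hw hv hm')
  exact ⟨m', ⟨mem_support_iff.mp hm', hlt⟩, hlt m hm⟩

lemma exists_coeff_sum_ne_zero [NoZeroDivisors R] {ι Δ : Type*} [Fintype ι] [LinearOrder Δ]
    {f : ι → MvPolynomial σ R} {τ : ι → σ →₀ ℕ} (e : ι → Δ) (hdiag : ∀ i, coeff (τ i) (f i) ≠ 0)
    (htri : ∀ i j, coeff (τ j) (f i) ≠ 0 → e j ≤ e i → i = j) {c : ι → R} (hc : c ≠ 0) :
    ∃ i, coeff (τ i) (∑ j, c j • f j) ≠ 0 := by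
  classical
  obtain ⟨i₀, hi₀⟩ := Function.ne_iff.mp hc
  obtain ⟨i, hi, hmin⟩ := Finset.exists_min_image {i | c i ≠ 0} e ⟨i₀, by simpa using hi₀⟩
  simp only [Finset.mem_filter_univ] at hi hmin
  refine ⟨i, ?_⟩
  have hoff : ∀ j ∈ Finset.univ, j ≠ i → coeff (τ i) (c j • f j) = 0 := fun j _ hji ↦ by
    by_contra h
    rw [coeff_smul, smul_eq_mul] at h
    exact hji (htri j i (right_ne_zero_of_mul h) (hmin j (left_ne_zero_of_mul h)))
  rw [coeff_sum, Finset.sum_eq_single_of_mem i (Finset.mem_univ i) hoff, coeff_smul]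
  exact mul_ne_zero hi (hdiag i)

lemma linearIndependent_of_isLeadingExponent [NoZeroDivisors R] {ι : Type*} [Finite ι]
    {f : ι → MvPolynomial σ R} {m : ι → σ →₀ ℕ} (hm : Function.Injective m)
    (hf : ∀ i, IsLeadingExponent w (m i) (f i)) : LinearIndependent R f := by
  cases nonempty_fintype ι
  rw [Fintype.linearIndependent_iff]
  intro c hc
  by_contra! hne
  have htri : ∀ i j, coeff (m j) (f i) ≠ 0 → w (m i) ≤ w (m j) → i = j := fun i j hij hle ↦
    hm (((hf i).2 _ (mem_support_iff.mpr hij)).resolve_right hle.not_gt).symm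
  obtain ⟨i, hi⟩ := exists_coeff_sum_ne_zero (fun i ↦ OrderDual.toDual (w (m i)))
    (fun i ↦ (hf i).1) htri (Function.ne_iff.mpr hne)
  exact hi (by rw [hc, coeff_zero])

/-- The exponents of the initial ideal of (the largest homogeneous ideal contained in) `I`, with
respect to `w`. Leading exponents are only taken inside graded pieces, so `w` need only separate
monomials of equal degree. -/
def initialExponents (w : (σ →₀ ℕ) →+ Γ) (I : Ideal (MvPolynomial σ R)) : Set (σ →₀ ℕ) :=
  {m | ∃ f ∈ gradedPiece I m.degree, IsLeadingExponent w m f}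

lemma mem_initialExponents_of_isLeadingExponent {I : Ideal (MvPolynomial σ R)} {d : ℕ}
    {f : MvPolynomial σ R} (hf : f ∈ gradedPiece I d) {m : σ →₀ ℕ}
    (hm : IsLeadingExponent w m f) : m ∈ initialExponents w I ∧ m.degree = d := by
  obtain rfl := degree_eq_of_mem_support (mem_gradedPiece.mp hf).2 (mem_support_iff.mpr hm.1)
  exact ⟨⟨f, hf, hm⟩, rfl⟩

lemma isUpperSet_initialExponents [IsOrderedCancelAddMonoid Γ] (w : (σ →₀ ℕ) →+ Γ)
    (I : Ideal (MvPolynomial σ R)) : IsUpperSet (initialExponents w I) := by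
  rintro m _ hle ⟨f, hf, hm⟩
  obtain ⟨u, rfl⟩ := exists_add_of_le hle
  exact ⟨_, by simpa only [map_add] using mul_monomial_mem_gradedPiece hf u, hm.mul_monomial u⟩

lemma card_le_card_initialExponents [Finite σ] [Nontrivial R] {I : Ideal (MvPolynomial σ R)} {a : ℕ}
    (hw : Set.InjOn w {m | m.degree = a}) {Q : Set (σ →₀ ℕ)}
    (hQ : ∀ m ∈ Q, ∀ m', w m < w m' → m' ∈ Q) {ι : Type*} [Fintype ι] {p : ι → MvPolynomial σ R}
    (hp : ∀ i, p i ∈ gradedPiece I a)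
    (h : ∀ c : ι → R, c ≠ 0 → ∃ m ∈ Q, coeff m (∑ i, c i • p i) ≠ 0) :
    Fintype.card ι ≤ (degreePart (initialExponents w I ∩ Q) a).card := by
  set T := degreePart (initialExponents w I ∩ Q) a
  let φ : (ι → R) →ₗ[R] T → R :=
    LinearMap.pi (fun m ↦ lcoeff R m.1) ∘ₗ Fintype.linearCombination R p
  suffices hφ : Function.Injective φ by simpa using card_le_of_injective R φ hφ
  rw [← LinearMap.ker_eq_bot, LinearMap.ker_eq_bot']
  intro c hc
  by_contra hne
  obtain ⟨m, hmQ, hm⟩ := h c hne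
  have hf : ∑ i, c i • p i ∈ gradedPiece I a :=
    Submodule.sum_mem _ fun i _ ↦ Submodule.smul_mem _ _ (hp i)
  obtain ⟨m', hm', hmm'⟩ := exists_isLeadingExponent (hw.mono fun v hv ↦
    degree_eq_of_mem_support (mem_gradedPiece.mp hf).2 hv) (mem_support_iff.mpr hm)
  have hm'Q : m' ∈ Q := hmm'.elim (fun h ↦ h ▸ hmQ) (hQ m hmQ m')
  obtain ⟨hm'I, hm'a⟩ := mem_initialExponents_of_isLeadingExponent hf hm'
  exact hm'.1 (congrFun hc ⟨m', mem_degreePart.mpr ⟨⟨hm'I, hm'Q⟩, hm'a⟩⟩)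

lemma card_le_card_initialExponents_of_linearIndependent [Finite σ] [Nontrivial R]
    {I : Ideal (MvPolynomial σ R)} {a : ℕ} (hw : Set.InjOn w {m | m.degree = a})
    {ι : Type*} [Fintype ι] {p : ι → MvPolynomial σ R} (hp : ∀ i, p i ∈ gradedPiece I a)
    (hli : LinearIndependent R p) :
    Fintype.card ι ≤ (degreePart (initialExponents w I) a).card := by
  refine (card_le_card_initialExponents hw (Q := Set.univ) (fun _ _ _ _ ↦ trivial) hp
    fun c hc ↦ ?_).trans_eq (by rw [Set.inter_univ])
  obtain ⟨m, hm⟩ := MvPolynomial.ne_zero_iff.mp fun h0 : ∑ i, c i • p i = 0 ↦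
    hc (funext (Fintype.linearIndependent_iff.mp hli c h0))
  exact ⟨m, trivial, hm⟩

lemma card_initialExponents_eq_finrank {k : Type*} [Field k] [Finite σ]
    (I : Ideal (MvPolynomial σ k)) {a : ℕ} (hw : Set.InjOn w {m | m.degree = a}) :
    (degreePart (initialExponents w I) a).card = Module.finrank k (gradedPiece I a) := by
  have := finite_gradedPiece I a
  apply le_antisymm
  · have hlead : ∀ m : degreePart (initialExponents w I) a,
        ∃ f ∈ gradedPiece I a, IsLeadingExponent w m.1 f := fun m ↦ by
      obtain ⟨⟨f, hf, hm⟩, ha⟩ := mem_degreePart.mp m.2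
      exact ⟨f, ha ▸ hf, hm⟩
    choose f hfI hf using hlead
    have hli : LinearIndependent k fun m ↦ (⟨f m, hfI m⟩ : gradedPiece I a) :=
      .of_comp (gradedPiece I a).subtype
        (linearIndependent_of_isLeadingExponent Subtype.val_injective hf)
    simpa using hli.fintype_card_le_finrank
  · let b := Module.finBasis k (gradedPiece I a)
    simpa using card_le_card_initialExponents_of_linearIndependent hw (fun i ↦ (b i).2)
      (b.linearIndependent.map' (gradedPiece I a).subtype (Submodule.ker_subtype _))

/-- By Dickson's lemma the minimal exponents form a finite set, and it suffices that `ε` does not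
kill the corresponding leading coefficients. -/
lemma exists_initialExponents_subset_map [Finite σ] [IsDomain R] [IsOrderedCancelAddMonoid Γ]
    (S : Type*) [CommRing S] (w : (σ →₀ ℕ) →+ Γ) (I : Ideal (MvPolynomial σ R)) :
    ∃ δ : R, δ ≠ 0 ∧ ∀ ε : R →+* S, ε δ ≠ 0 →
      initialExponents w I ⊆ initialExponents w (I.map (MvPolynomial.map ε)) := by
  have hfin : {m | Minimal (· ∈ initialExponents w I) m}.Finite :=
    WellQuasiOrderedLE.finite_of_isAntichain (setOfPred_minimal_antichain _)
  have hlead : ∀ m : hfin.toFinset, ∃ f ∈ gradedPiece I m.1.degree, IsLeadingExponent w m.1 f :=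
    fun m ↦ (hfin.mem_toFinset.mp m.2).prop
  choose f hfI hf using hlead
  refine ⟨∏ m, coeff m.1 (f m), Finset.prod_ne_zero_iff.mpr fun m _ ↦ (hf m).1,
    fun ε hε m hm ↦ ?_⟩
  obtain ⟨m₀, hle, hm₀⟩ := exists_minimal_le_of_wellFoundedLT (· ∈ initialExponents w I) m hm
  let μ : hfin.toFinset := ⟨m₀, hfin.mem_toFinset.mpr hm₀⟩
  have hμ : ε (coeff m₀ (f μ)) ≠ 0 := fun h ↦ hε <| by
    rw [map_prod]
    exact Finset.prod_eq_zero (Finset.mem_univ μ) h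
  exact isUpperSet_initialExponents w _ hle ⟨_, map_mem_gradedPiece ε (hfI μ), (hf μ).map ε hμ⟩

end LeadingExponents

section MonomialExponents

open scoped Pointwise

variable {σ R : Type*} [CommSemiring R]

/-- The exponents of the monomials of `I`. -/
def exponents (I : Ideal (MvPolynomial σ R)) : Set (σ →₀ ℕ) := {m | monomial m 1 ∈ I}

lemma isUpperSet_exponents (I : Ideal (MvPolynomial σ R)) : IsUpperSet (exponents I) := by
  rintro m _ hle hm
  obtain ⟨u, rfl⟩ := exists_add_of_le hle
  simpa [exponents] using I.mul_mem_right (monomial u 1) hm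

lemma isUpperSet_add {M : Type*} [AddCommMonoid M] [PartialOrder M] [CanonicallyOrderedAdd M]
    {E F : Set M} (hE : IsUpperSet E) : IsUpperSet (E + F) := by
  rintro _ _ hle ⟨u, hu, v, hv, rfl⟩
  obtain ⟨c, rfl⟩ := exists_add_of_le hle
  exact ⟨u + c, hE le_self_add hu, v, hv, add_right_comm u c v⟩

end MonomialExponents

section Specialization

variable {σ ι : Type*}

lemma exists_det_coeff_ne_zero [Fintype ι] [DecidableEq ι] {k : Type*} [Field k]
    {v : ι → MvPolynomial σ k} (hv : LinearIndependent k v) :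
    ∃ m : ι → σ →₀ ℕ, (Matrix.of fun i j ↦ coeff (m j) (v i)).det ≠ 0 := by
  classical
  let s := Finset.univ.biUnion fun i ↦ (v i).support
  let M : Matrix ι s k := .of fun i m ↦ coeff m.1 (v i)
  have hM : LinearIndependent k M.row := by
    rw [Fintype.linearIndependent_iff] at hv ⊢
    refine fun c hc ↦ hv c (MvPolynomial.ext _ _ fun m ↦ ?_)
    by_cases hm : m ∈ s
    · simpa [coeff_sum, M] using congrFun hc ⟨m, hm⟩
    · have : ∀ i, coeff m (v i) = 0 := by simpa [s] using hm
      simp [coeff_sum, this]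
  have hrank : Module.finrank k (Submodule.span k (Set.range M.col)) = Fintype.card ι := by
    rw [← M.rank_eq_finrank_span_cols, hM.rank_matrix]
  obtain ⟨f, hf, -, hfli⟩ := Submodule.exists_fun_fin_finrank_span_eq k (Set.range M.col)
  choose m hm using hf
  let e := Fintype.equivFinOfCardEq hrank.symm
  let N : Matrix ι ι k := .of fun i j ↦ coeff (m (e j)).1 (v i)
  have hcol : N.col = f ∘ e := funext fun j ↦ hm _
  have hN : LinearIndependent k N.col := hcol ▸ hfli.comp _ e.injective
  exact ⟨_, N.isUnit_iff_isUnit_det.mp (Matrix.linearIndependent_cols_iff_isUnit.mp hN) |>.ne_zero⟩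

lemma linearIndependent_of_det_coeff_ne_zero [Fintype ι] [DecidableEq ι] {R : Type*} [CommRing R]
    [IsDomain R] {v : ι → MvPolynomial σ R} {m : ι → σ →₀ ℕ}
    (h : (Matrix.of fun i j ↦ coeff (m j) (v i)).det ≠ 0) : LinearIndependent R v :=
  .of_comp (LinearMap.pi fun j ↦ lcoeff R (m j)) (Matrix.linearIndependent_rows_of_det_ne_zero h)

lemma map_det_coeff [Fintype ι] [DecidableEq ι] {A C : Type*} [CommRing A] [CommRing C]
    (η : A →+* C) (v : ι → MvPolynomial σ A) (m : ι → σ →₀ ℕ) :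
    η (Matrix.of fun i j ↦ coeff (m j) (v i)).det =
      (Matrix.of fun i j ↦ coeff (m j) (map η (v i))).det := by
  rw [RingHom.map_det]
  exact congrArg Matrix.det (Matrix.ext fun i j ↦ (coeff_map η (v i) (m j)).symm)

lemma exists_forall_linearIndependent_map [Finite ι] {A B k : Type*} [CommRing A] [CommRing B]
    [IsDomain B] [Field k] (ε : A →+* k) {v : ι → MvPolynomial σ A}
    (hv : LinearIndependent k fun i ↦ map ε (v i)) :
    ∃ δ : A, ε δ ≠ 0 ∧ ∀ ε' : A →+* B, ε' δ ≠ 0 → LinearIndependent B fun i ↦ map ε' (v i) := by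
  classical
  cases nonempty_fintype ι
  obtain ⟨m, hm⟩ := exists_det_coeff_ne_zero hv
  exact ⟨_, (map_det_coeff ε v m).trans_ne hm, fun ε' h ↦
    linearIndependent_of_det_coeff_ne_zero ((map_det_coeff ε' v m).symm.trans_ne h)⟩

end Specialization

section CoordinateChange

variable {K n}

lemma coordChange_X (g : GL (Fin n) K) (i : Fin n) :
    coordChange K n g (X i) = ∑ j, (g : Matrix (Fin n) (Fin n) K) j i • X j :=
  aeval_X _ i

lemma coordChange_mul (g h : GL (Fin n) K) :
    coordChange K n (g * h) = (coordChange K n g).comp (coordChange K n h) := by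
  refine algHom_ext fun i ↦ ?_
  simp only [AlgHom.comp_apply, coordChange_X, map_sum, map_smul, Finset.smul_sum, smul_smul,
    Units.val_mul, Matrix.mul_apply, Finset.sum_smul]
  rw [Finset.sum_comm]
  simp only [mul_comm]

lemma coordChange_one : coordChange K n 1 = AlgHom.id K _ :=
  algHom_ext fun i ↦ by simp [coordChange_X, Matrix.one_apply]

@[simp] lemma coordChange_inv_apply_apply (g : GL (Fin n) K) (f : PS K n) :
    coordChange K n g⁻¹ (coordChange K n g f) = f := by
  rw [← AlgHom.comp_apply, ← coordChange_mul, inv_mul_cancel, coordChange_one, AlgHom.id_apply]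

@[simp] lemma coordChange_apply_inv_apply (g : GL (Fin n) K) (f : PS K n) :
    coordChange K n g (coordChange K n g⁻¹ f) = f := by
  simpa only [inv_inv] using coordChange_inv_apply_apply g⁻¹ f

lemma linearIndependent_coordChange {ι : Type*} {v : ι → PS K n} (hv : LinearIndependent K v)
    (g : GL (Fin n) K) : LinearIndependent K fun i ↦ coordChange K n g (v i) :=
  hv.map' (coordChange K n g).toLinearMap <| LinearMap.ker_eq_bot.mpr <|
    Function.LeftInverse.injective (coordChange_inv_apply_apply g)

lemma isHomogeneous_coordChange {d : ℕ} {f : PS K n} (hf : f.IsHomogeneous d)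
    (g : GL (Fin n) K) : (coordChange K n g f).IsHomogeneous d := by
  have hX : ∀ i, (∑ j, (g : Matrix (Fin n) (Fin n) K) j i • (X j : PS K n)).IsHomogeneous 1 :=
    fun i ↦ IsHomogeneous.sum _ _ _ fun j _ ↦
      (homogeneousSubmodule (Fin n) K 1).smul_mem _ (isHomogeneous_X K j)
  exact (one_mul d) ▸ hf.aeval _ hX

end CoordinateChange

section AttainsRank

lemma exists_linearIndependent_of_forall_mem_span {k M : Type*} [DivisionRing k] [AddCommGroup M]
    [Module k M] {ι : Type*} {v : ι → M} (hv : LinearIndependent k v) {T : Set M}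
    (hT : ∀ i, v i ∈ Submodule.span k T) :
    ∃ v' : ι → M, LinearIndependent k v' ∧ ∀ i, v' i ∈ T := by
  obtain ⟨b, hbT, hspan, hb⟩ := exists_linearIndependent k T
  have hv' : LinearIndependent k fun i ↦ (⟨v i, hspan ▸ hT i⟩ : Submodule.span k b) :=
    .of_comp (Submodule.span k b).subtype hv
  obtain ⟨e⟩ : Nonempty (ι ↪ b) := by
    rw [← Cardinal.lift_mk_le', ← rank_span_set hb]
    simpa using hv'.cardinal_lift_le_rank
  exact ⟨fun i ↦ e i, hb.comp e e.injective, fun i ↦ hbT (e i).2⟩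

variable {K n}

/-- The products of degree `d` of an element of the graded family `V` and an element of the graded
family `U` moved by `g`. -/
def twistedProducts (V U : ℕ → Set (PS K n)) (g : GL (Fin n) K) (d : ℕ) : Set (PS K n) :=
  {f | ∃ a b, a + b = d ∧ ∃ p ∈ V a, ∃ q ∈ U b, p * coordChange K n g q = f}

/-- For some, equivalently for a general, change of coordinates `g` the products of degree `d` of
elements of `V` and elements of `g(U)` span a space of dimension at least `r`. -/
def AttainsRank (V U : ℕ → Set (PS K n)) (d r : ℕ) : Prop :=
  ∃ g : GL (Fin n) K, ∃ v : Fin r → PS K n,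
    LinearIndependent K v ∧ ∀ i, v i ∈ twistedProducts V U g d

variable {V U : ℕ → Set (PS K n)} {d r : ℕ}

lemma AttainsRank.mono {V' : ℕ → Set (PS K n)} (hV : ∀ a ≤ d, V a ⊆ V' a)
    (h : AttainsRank V U d r) : AttainsRank V' U d r := by
  obtain ⟨g, v, hv, hmem⟩ := h
  refine ⟨g, v, hv, fun i ↦ ?_⟩
  obtain ⟨a, b, hab, p, hp, hq⟩ := hmem i
  exact ⟨a, b, hab, p, hV a (by omega) hp, hq⟩

lemma AttainsRank.symm (h : AttainsRank V U d r) : AttainsRank U V d r := by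
  obtain ⟨g, v, hv, hmem⟩ := h
  refine ⟨g⁻¹, _, linearIndependent_coordChange hv g⁻¹, fun i ↦ ?_⟩
  obtain ⟨a, b, hab, p, hp, q, hq, hpq⟩ := hmem i
  refine ⟨b, a, by omega, q, hq, p, hp, ?_⟩
  rw [← hpq, map_mul, coordChange_inv_apply_apply, mul_comm]

lemma AttainsRank.of_image_coordChange (g : GL (Fin n) K)
    (h : AttainsRank (fun a ↦ coordChange K n g '' V a) U d r) : AttainsRank V U d r := by
  obtain ⟨g', v, hv, hmem⟩ := h
  refine ⟨g⁻¹ * g', _, linearIndependent_coordChange hv g⁻¹, fun i ↦ ?_⟩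
  obtain ⟨a, b, hab, _, ⟨p, hp, rfl⟩, q, hq, hpq⟩ := hmem i
  refine ⟨a, b, hab, p, hp, q, hq, ?_⟩
  rw [← hpq, map_mul, coordChange_inv_apply_apply, coordChange_mul, AlgHom.comp_apply]

lemma AttainsRank.of_span (h : AttainsRank (fun a ↦ Submodule.span K (V a)) U d r) :
    AttainsRank V U d r := by
  obtain ⟨g, v, hv, hmem⟩ := h
  refine ⟨g, exists_linearIndependent_of_forall_mem_span hv fun i ↦ ?_⟩
  obtain ⟨a, b, hab, p, hp, q, hq, hpq⟩ := hmem i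
  have hle : Submodule.span K (V a) ≤ (Submodule.span K (twistedProducts V U g d)).comap
      (LinearMap.mulRight K (coordChange K n g q)) :=
    Submodule.span_le.mpr fun p hp ↦ Submodule.subset_span ⟨a, b, hab, p, hp, q, hq, rfl⟩
  exact hpq ▸ hle hp

end AttainsRank

section Degeneration

variable {K n}

/-- The diagonal change of coordinates `x_i ↦ t ^ W i • x_i`. -/
def weightTorus (W : Fin n → ℕ) (t : Kˣ) : GL (Fin n) K :=
  Units.map (Matrix.diagonalRingHom (Fin n) K : (Fin n → K) →* Matrix (Fin n) (Fin n) K)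
    (MulEquiv.piUnits.symm fun i ↦ t ^ W i)

lemma coordChange_weightTorus_X (W : Fin n → ℕ) (t : Kˣ) (i : Fin n) :
    coordChange K n (weightTorus W t) (X i) = t ^ W i • X i := by
  rw [coordChange_X, Finset.sum_eq_single_of_mem i (Finset.mem_univ i)]
  · simp [weightTorus, Units.smul_def]
  · intro j _ hj
    simp [weightTorus, Matrix.diagonal_apply_ne _ hj]

lemma coordChange_weightTorus_monomial (W : Fin n → ℕ) (t : Kˣ) (m : Fin n →₀ ℕ) (c : K) :
    coordChange K n (weightTorus W t) (monomial m c) = t ^ Finsupp.weight W m • monomial m c := by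
  simp only [monomial_eq, Finsupp.prod_fintype _ _ fun _ ↦ pow_zero _, map_mul, algHom_C, map_prod,
    map_pow, coordChange_weightTorus_X, smul_pow, Finset.prod_smul, mul_smul_comm,
    Finsupp.weight_eq_sum, smul_eq_mul]
  congr 1
  simp only [← Finset.prod_pow_eq_pow_sum, ← pow_mul, mul_comm]

/-- The family `t ↦ t ^ W(m) • f(t⁻¹ • x)` of polynomials, where `t` acts on the variables through
the weights `W` and `W(m)` is the weight of `m`. If no exponent of `f` has larger weight than `m`,
it extends to `t = 0`. -/
def weightFamily (W : Fin n → ℕ) (m : Fin n →₀ ℕ) (f : PS K n) :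
    MvPolynomial (Fin n) (Polynomial K) :=
  ∑ u ∈ f.support, monomial u
    (Polynomial.C (coeff u f) * Polynomial.X ^ (Finsupp.weight W m - Finsupp.weight W u))

variable {W : Fin n → ℕ} {m : Fin n →₀ ℕ} {f : PS K n}

lemma map_eval_weightFamily (hm : IsLeadingExponent (Finsupp.weight W) m f) (t : Kˣ) :
    map (Polynomial.evalRingHom (t : K)) (weightFamily W m f) =
      t ^ Finsupp.weight W m • coordChange K n (weightTorus W t⁻¹) f := by
  conv_rhs => rw [f.as_sum]
  rw [weightFamily, map_sum, map_sum, Finset.smul_sum]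
  refine Finset.sum_congr rfl fun u hu ↦ ?_
  have hle : Finsupp.weight W u ≤ Finsupp.weight W m :=
    (hm.2 u hu).elim (fun h ↦ h ▸ le_rfl) le_of_lt
  rw [map_monomial, coordChange_weightTorus_monomial, smul_smul, inv_pow, ← pow_sub _ hle,
    Units.smul_def, smul_monomial]
  simp [mul_comm]

lemma map_eval_zero_weightFamily (hm : IsLeadingExponent (Finsupp.weight W) m f) :
    map (Polynomial.evalRingHom (0 : K)) (weightFamily W m f) = coeff m f • monomial m 1 := by
  rw [weightFamily, map_sum, Finset.sum_eq_single_of_mem m (mem_support_iff.mpr hm.1)]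
  · simp [smul_monomial]
  · intro u hu hne
    have hpos := Nat.sub_ne_zero_of_lt ((hm.2 u hu).resolve_left hne)
    simp [hpos]

lemma map_eval_map_C (t : K) (f : PS K n) :
    map (Polynomial.evalRingHom t) (map Polynomial.C f) = f := by
  have heval : (Polynomial.evalRingHom t).comp Polynomial.C = RingHom.id K := by ext; simp
  rw [MvPolynomial.map_map, heval, MvPolynomial.map_id]

lemma exists_linearIndependent_weightTorus_mul [Infinite K] {ι : Type*} [Finite ι]
    {m : ι → Fin n →₀ ℕ} {f c : ι → PS K n}
    (hm : ∀ i, IsLeadingExponent (Finsupp.weight W) (m i) (f i))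
    (hli : LinearIndependent K fun i ↦ monomial (m i) 1 * c i) :
    ∃ t : Kˣ, LinearIndependent K fun i ↦ coordChange K n (weightTorus W t) (f i) * c i := by
  let P : ι → MvPolynomial (Fin n) (Polynomial K) := fun i ↦
    weightFamily W (m i) (f i) * map Polynomial.C (c i)
  have hP₀ : LinearIndependent K fun i ↦ map (Polynomial.evalRingHom (0 : K)) (P i) := by
    convert hli.units_smul fun i ↦ Units.mk0 _ (hm i).1 using 2 with i
    rw [map_mul, map_eval_map_C, map_eval_zero_weightFamily (hm i), smul_mul_assoc]
    rfl
  obtain ⟨δ, hδ₀, hδ⟩ := exists_forall_linearIndependent_map (B := K) _ hP₀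
  have hδX : δ * Polynomial.X ≠ 0 := mul_ne_zero (ne_zero_of_map hδ₀) Polynomial.X_ne_zero
  obtain ⟨t, ht⟩ : ∃ t : K, (δ * Polynomial.X).eval t ≠ 0 := by
    contrapose! hδX
    exact Polynomial.zero_of_eval_zero _ hδX
  rw [Polynomial.eval_mul, Polynomial.eval_X] at ht
  let τ := Units.mk0 t (right_ne_zero_of_mul ht)
  refine ⟨τ⁻¹, ?_⟩
  have hPt : LinearIndependent K fun i ↦ map (Polynomial.evalRingHom (τ : K)) (P i) :=
    hδ _ (left_ne_zero_of_mul ht)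
  refine (LinearIndependent.units_smul_iff _ fun i ↦ τ ^ Finsupp.weight W (m i)).mp ?_
  have hP : ∀ i, map (Polynomial.evalRingHom (τ : K)) (P i) =
      τ ^ Finsupp.weight W (m i) • (coordChange K n (weightTorus W τ⁻¹) (f i) * c i) := fun i ↦ by
    rw [map_mul, map_eval_map_C, map_eval_weightFamily (hm i), smul_mul_assoc]
  simp only [hP] at hPt
  exact hPt

variable (K) in
/-- The monomials of degree `a` with exponent in `E`. -/
def monomialsOfDegree (E : Set (Fin n →₀ ℕ)) (a : ℕ) : Set (PS K n) :=
  (monomial · 1) '' degreePart E a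

lemma AttainsRank.of_isLeadingExponent [Infinite K] {V U : ℕ → Set (PS K n)} {d r : ℕ}
    {E : Set (Fin n →₀ ℕ)}
    (hE : ∀ m ∈ E, ∃ f ∈ V m.degree, IsLeadingExponent (Finsupp.weight W) m f)
    (h : AttainsRank (monomialsOfDegree K E) U d r) : AttainsRank V U d r := by
  obtain ⟨g, v, hv, hmem⟩ := h
  choose a b hab p hp q hq hpq using hmem
  choose m hm hmp using hp
  choose f hfV hfm using fun i ↦ hE (m i) (mem_degreePart.mp (hm i)).1
  obtain rfl : (fun i ↦ monomial (m i) 1 * coordChange K n g (q i)) = v :=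
    funext fun i ↦ by rw [← hpq, ← hmp]
  obtain ⟨t, ht⟩ := exists_linearIndependent_weightTorus_mul hfm hv
  refine .of_image_coordChange (weightTorus W t) ⟨g, _, ht, fun i ↦
    ⟨a i, b i, hab i, _, ⟨f i, ?_, rfl⟩, q i, hq i, rfl⟩⟩
  exact (mem_degreePart.mp (hm i)).2 ▸ hfV i

end Degeneration

section WeightVectors

variable {n}

lemma injOn_weight_pow {a b : ℕ} (h : a < b) (π : Equiv.Perm (Fin n)) :
    Set.InjOn (Finsupp.weight fun i ↦ b ^ (π i : ℕ)) {m : Fin n →₀ ℕ | m.degree = a} := by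
  have hlt : ∀ m : Fin n →₀ ℕ, m.degree = a → ∀ i, m i < b := fun m hm i ↦
    ((Finsupp.le_degree i m).trans_eq hm).trans_lt h
  have hdigits : ∀ m (hm : m.degree = a), Finsupp.weight (fun i ↦ b ^ (π i : ℕ)) m =
      finFunctionFinEquiv fun j ↦ ⟨m (π.symm j), hlt m hm _⟩ := fun m hm ↦ by
    rw [finFunctionFinEquiv_apply, Finsupp.weight_eq_sum, ← Equiv.sum_comp π.symm]
    simp
  intro u hu v hv huv
  rw [hdigits u hu, hdigits v hv] at huv
  ext i
  simpa using congrFun (finFunctionFinEquiv.injective (Fin.ext huv)) (π i)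

end WeightVectors

section MonomialDegenerations

variable {K n} {I : Ideal (PS K n)} {d : ℕ} {E : Set (Fin n →₀ ℕ)} {W : Fin n → ℕ}

/-- The ideal `I` degenerates in degrees `≤ d` to the monomial ideal with exponents `E`: the Hilbert
function does not drop, and the ranks of products with any other family do not grow. Requiring `E`
to contain everything in degrees `> d` leaves only finitely many such `E`. -/
structure IsDegeneration (I : Ideal (PS K n)) (d : ℕ) (E : Set (Fin n →₀ ℕ)) : Prop where
  isUpperSet : IsUpperSet E
  mem_of_lt : ∀ m, d < m.degree → m ∈ E
  hilb_le : ∀ a ≤ d, hilb K n I a ≤ (degreePart E a).card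
  attainsRank : ∀ r U, AttainsRank (monomialsOfDegree K E) U d r →
    AttainsRank (fun a ↦ gradedPiece I a) U d r

lemma finite_setOf_isDegeneration (I : Ideal (PS K n)) (d : ℕ) :
    {E | IsDegeneration I d E}.Finite := by
  refine .of_injOn (f := (· ∩ {m | m.degree ≤ d})) (t := 𝒫 {m | m.degree ≤ d})
    (fun _ _ ↦ Set.inter_subset_right) (fun E hE F hF h ↦ ?_)
    (Finsupp.finite_of_degree_le d).finite_subsets
  ext m
  by_cases hm : m.degree ≤ d
  · simpa [hm] using Set.ext_iff.mp h m
  · exact iff_of_true (hE.mem_of_lt m (not_le.mp hm)) (hF.mem_of_lt m (not_le.mp hm))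

/-- The exponents of the initial ideal of `I`, enlarged by all exponents of degree `> d`. -/
def truncatedInitialExponents (W : Fin n → ℕ) (d : ℕ) (I : Ideal (PS K n)) :
    Set (Fin n →₀ ℕ) :=
  initialExponents (Finsupp.weight W) I ∪ {m | d < m.degree}

lemma degreePart_truncatedInitialExponents_inter {a : ℕ} (ha : a ≤ d) (Q : Set (Fin n →₀ ℕ)) :
    degreePart (truncatedInitialExponents W d I ∩ Q) a =
      degreePart (initialExponents (Finsupp.weight W) I ∩ Q) a := by
  ext m
  simp only [mem_degreePart, truncatedInitialExponents, Set.mem_inter_iff, Set.mem_union,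
    Set.mem_ofPred_eq]
  constructor
  · rintro ⟨⟨hm | hm, hQ⟩, rfl⟩
    · exact ⟨⟨hm, hQ⟩, rfl⟩
    · omega
  · exact fun ⟨⟨hm, hQ⟩, h⟩ ↦ ⟨⟨.inl hm, hQ⟩, h⟩

lemma degreePart_truncatedInitialExponents {a : ℕ} (ha : a ≤ d) :
    degreePart (truncatedInitialExponents W d I) a =
      degreePart (initialExponents (Finsupp.weight W) I) a := by
  simpa only [Set.inter_univ] using degreePart_truncatedInitialExponents_inter ha Set.univ

lemma isDegeneration_truncatedInitialExponents [Infinite K]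
    (hW : ∀ a ≤ d, Set.InjOn (Finsupp.weight W) {m | m.degree = a}) (I : Ideal (PS K n)) :
    IsDegeneration I d (truncatedInitialExponents W d I) where
  isUpperSet := (isUpperSet_initialExponents _ I).union fun _ _ hle h ↦
    h.trans_le (Finsupp.degree_mono hle)
  mem_of_lt _ := .inr
  hilb_le a ha := by
    rw [degreePart_truncatedInitialExponents ha, card_initialExponents_eq_finrank I (hW a ha)]
    rfl
  attainsRank r U h := by
    have h' : AttainsRank (monomialsOfDegree K (initialExponents (Finsupp.weight W) I)) U d r :=
      h.mono fun a ha ↦ by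
        rw [monomialsOfDegree, degreePart_truncatedInitialExponents ha, monomialsOfDegree]
    exact h'.of_isLeadingExponent fun m hm ↦ hm

lemma gradedPiece_restrictSupportIdeal_le (hE : IsUpperSet E) (a : ℕ) :
    gradedPiece (restrictSupportIdeal K E hE) a ≤
      Submodule.span K (monomialsOfDegree K E a) := by
  rw [monomialsOfDegree, ← restrictSupport_eq_span]
  exact fun f hf m hm ↦ mem_degreePart.mpr ⟨hf.1 hm, degree_eq_of_mem_support hf.2 hm⟩

variable (K) in
/-- The image under the change of coordinates `g` of the monomial ideal with exponents `E`. -/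
def movedMonomialIdeal (hE : IsUpperSet E) (g : GL (Fin n) K) : Ideal (PS K n) :=
  (restrictSupportIdeal K E hE).comap (coordChange K n g⁻¹)

lemma coordChange_monomial_mem_gradedPiece (hE : IsUpperSet E) (g : GL (Fin n) K)
    {u : Fin n →₀ ℕ} {a : ℕ} (hu : u ∈ degreePart E a) :
    coordChange K n g (monomial u 1) ∈ gradedPiece (movedMonomialIdeal K hE g) a := by
  rw [mem_degreePart] at hu
  refine mem_gradedPiece.mpr ⟨?_, isHomogeneous_coordChange (isHomogeneous_monomial 1 hu.2) g⟩
  rw [movedMonomialIdeal, Ideal.mem_comap, coordChange_inv_apply_apply]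
  exact (monomial_mem_restrictSupport K).mpr (.inl hu.1)

lemma gradedPiece_movedMonomialIdeal_subset (hE : IsUpperSet E) (g : GL (Fin n) K) (a : ℕ) :
    (gradedPiece (movedMonomialIdeal K hE g) a : Set (PS K n)) ⊆
      coordChange K n g '' Submodule.span K (monomialsOfDegree K E a) := fun f hf ↦
  ⟨coordChange K n g⁻¹ f, gradedPiece_restrictSupportIdeal_le hE a
    ⟨hf.1, isHomogeneous_coordChange hf.2 g⁻¹⟩, coordChange_apply_inv_apply g f⟩

lemma card_degreePart_le_hilb_movedMonomialIdeal (hE : IsUpperSet E) (g : GL (Fin n) K) (a : ℕ) :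
    (degreePart E a).card ≤ hilb K n (movedMonomialIdeal K hE g) a := by
  have := finite_gradedPiece (movedMonomialIdeal K hE g) a
  have hli : LinearIndependent K fun u : degreePart E a ↦
      (⟨_, coordChange_monomial_mem_gradedPiece hE g u.2⟩ :
        gradedPiece (movedMonomialIdeal K hE g) a) :=
    .of_comp (Submodule.subtype _) <| linearIndependent_coordChange
      ((basisMonomials (Fin n) K).linearIndependent.comp _ Subtype.val_injective) g
  exact (Fintype.card_coe _).symm.trans_le hli.fintype_card_le_finrank

lemma IsDegeneration.truncatedInitialExponents_moved [Infinite K]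
    (hW : ∀ a ≤ d, Set.InjOn (Finsupp.weight W) {m | m.degree = a}) (hE : IsDegeneration I d E)
    (g : GL (Fin n) K) :
    IsDegeneration I d
      (truncatedInitialExponents W d (movedMonomialIdeal K hE.isUpperSet g)) := by
  have h := isDegeneration_truncatedInitialExponents hW (movedMonomialIdeal K hE.isUpperSet g)
  refine ⟨h.isUpperSet, h.mem_of_lt, fun a ha ↦ ?_, fun r U hr ↦ ?_⟩
  · exact (hE.hilb_le a ha).trans <|
      (card_degreePart_le_hilb_movedMonomialIdeal hE.isUpperSet g a).trans (h.hilb_le a ha)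
  · refine hE.attainsRank r U (.of_span (.of_image_coordChange g ?_))
    exact (h.attainsRank r U hr).mono fun a _ ↦
      gradedPiece_movedMonomialIdeal_subset hE.isUpperSet g a

end MonomialDegenerations

section Transvections

variable {K n} {p q : Fin n}

lemma coordChange_transvection_X_same (h : p ≠ q) :
    coordChange K n (Matrix.SpecialLinearGroup.transvection h (1 : K)) (X q) = X p + X q := by
  simp [coordChange_X, Matrix.SpecialLinearGroup.transvection_coe, Matrix.one_apply,
    Matrix.single_apply, add_smul, Finset.sum_add_distrib, ite_smul, add_comm]

lemma coordChange_transvection_X_of_ne (h : p ≠ q) {i : Fin n} (hi : q ≠ i) :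
    coordChange K n (Matrix.SpecialLinearGroup.transvection h (1 : K)) (X i) = X i := by
  simp [coordChange_X, Matrix.SpecialLinearGroup.transvection_coe, Matrix.one_apply,
    hi, ite_smul]

lemma coordChange_transvection_monomial (h : p ≠ q) (m : Fin n →₀ ℕ) :
    coordChange K n (Matrix.SpecialLinearGroup.transvection h (1 : K)) (monomial m 1) =
      ∑ l ∈ Finset.range (m q + 1), monomial (transfer m q p l) ((m q).choose l : K) := by
  have hfix : coordChange K n (Matrix.SpecialLinearGroup.transvection h (1 : K))
      (monomial (m.erase q) 1) = monomial (m.erase q) 1 := by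
    rw [monomial_eq, map_mul, algHom_C, Finsupp.prod, map_prod]
    refine congrArg _ (Finset.prod_congr rfl fun i hi ↦ ?_)
    rw [map_pow, coordChange_transvection_X_of_ne h (by rintro rfl; simp at hi)]
  have hsplit : (monomial m 1 : PS K n) = X q ^ m q * monomial (m.erase q) 1 := by
    rw [X_pow_eq_monomial, monomial_mul, one_mul, Finsupp.single_add_erase]
  rw [hsplit, map_mul, map_pow, coordChange_transvection_X_same, hfix, add_pow, Finset.sum_mul]
  refine Finset.sum_congr rfl fun l hl ↦ ?_
  have hexp : Finsupp.single p l + Finsupp.single q (m q - l) + m.erase q = transfer m q p l := by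
    ext i
    simp only [transfer_apply, Finsupp.add_apply, Finsupp.single_apply, Finsupp.erase_apply]
    grind
  rw [X_pow_eq_monomial, X_pow_eq_monomial, monomial_mul, ← C_eq_coe_nat, mul_right_comm,
    monomial_mul, hexp, mul_comm, C_mul_monomial]
  simp

lemma eq_or_weight_lt_of_coeff_transvection_ne_zero {W : Fin n → ℕ} (hW : W q < W p) (h : p ≠ q)
    {m v : Fin n →₀ ℕ}
    (hv : coeff v (coordChange K n (Matrix.SpecialLinearGroup.transvection h (1 : K))
      (monomial m 1)) ≠ 0) :
    v = m ∨ Finsupp.weight W m < Finsupp.weight W v := by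
  rw [coordChange_transvection_monomial, coeff_sum] at hv
  obtain ⟨l, hl, hne⟩ := Finset.exists_ne_zero_of_sum_ne_zero hv
  obtain rfl : transfer m q p l = v := by
    by_contra hlv
    exact hne (by rw [coeff_monomial, if_neg hlv])
  have hwt := weight_transfer W p (Nat.lt_succ_iff.mp (Finset.mem_range.mp hl))
  rcases l.eq_zero_or_pos with rfl | hl
  · exact .inl (by simp [transfer])
  · exact .inr (by nlinarith)

lemma coeff_transfer_transvection (h : p ≠ q) (m : Fin n →₀ ℕ) {l : ℕ} (hl : l ≤ m q) :
    coeff (transfer m q p l) (coordChange K n (Matrix.SpecialLinearGroup.transvection h (1 : K))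
      (monomial m 1)) = ((m q).choose l : K) := by
  rw [coordChange_transvection_monomial, coeff_sum,
    Finset.sum_eq_single_of_mem l (Finset.mem_range_succ_iff.mpr hl), coeff_monomial, if_pos rfl]
  intro l' _ hne
  rw [coeff_monomial, if_neg]
  intro heq
  have := DFunLike.congr_fun heq p
  simp only [transfer_apply, h.symm, if_true, if_false] at this
  omega

lemma coeff_self_transvection_ne_zero (h : p ≠ q) (m : Fin n →₀ ℕ) :
    coeff m (coordChange K n (Matrix.SpecialLinearGroup.transvection h (1 : K))
      (monomial m 1)) ≠ 0 := by
  simpa [transfer] using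
    (coeff_transfer_transvection (K := K) h m (Nat.zero_le _)).trans_ne (by simp)

end Transvections

section StableDegenerations

variable {K n} {d : ℕ} {E : Set (Fin n →₀ ℕ)} {W : Fin n → ℕ}

/-- The number of exponents of degree `a` and weight at least `s` in `E`. -/
def weightCount (W : Fin n → ℕ) (E : Set (Fin n →₀ ℕ)) (a s : ℕ) : ℕ :=
  (degreePart (E ∩ {m | s ≤ Finsupp.weight W m}) a).card

lemma card_le_weightCount_truncatedInitialExponents {a : ℕ} (ha : a ≤ d)
    (hW : Set.InjOn (Finsupp.weight W) {m | m.degree = a}) (hE : IsUpperSet E) (g : GL (Fin n) K)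
    {s : ℕ} {T : Finset (Fin n →₀ ℕ)} (hT : T ⊆ degreePart E a) {τ : (Fin n →₀ ℕ) → Fin n →₀ ℕ}
    (hτ : ∀ u ∈ T, s ≤ Finsupp.weight W (τ u))
    (hdiag : ∀ u ∈ T, coeff (τ u) (coordChange K n g (monomial u 1)) ≠ 0)
    (htri : ∀ u ∈ T, ∀ v ∈ T, coeff (τ v) (coordChange K n g (monomial u 1)) ≠ 0 →
      Finsupp.weight W v ≤ Finsupp.weight W u → u = v) :
    T.card ≤ weightCount W (truncatedInitialExponents W d (movedMonomialIdeal K hE g)) a s := by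
  rw [weightCount, degreePart_truncatedInitialExponents_inter ha, ← Fintype.card_coe T]
  refine card_le_card_initialExponents hW (fun m hm m' h ↦ le_trans hm h.le)
    (p := fun u : T ↦ coordChange K n g (monomial u.1 1))
    (fun u ↦ coordChange_monomial_mem_gradedPiece hE g (hT u.2)) fun c hc ↦ ?_
  obtain ⟨u, hu⟩ := exists_coeff_sum_ne_zero (fun u : T ↦ Finsupp.weight W u.1)
    (fun u ↦ hdiag u.1 u.2) (fun u v huv hle ↦ Subtype.ext (htri _ u.2 _ v.2 huv hle)) hc
  exact ⟨_, hτ u.1 u.2, hu⟩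

variable {p q : Fin n}

lemma weightCount_le_truncatedInitialExponents {a : ℕ} (ha : a ≤ d)
    (hW : Set.InjOn (Finsupp.weight W) {m | m.degree = a}) (hE : IsUpperSet E) (hpq : W q < W p)
    (h : p ≠ q) (s : ℕ) :
    weightCount W E a s ≤ weightCount W (truncatedInitialExponents W d
      (movedMonomialIdeal K hE (Matrix.SpecialLinearGroup.transvection h (1 : K)))) a s := by
  refine card_le_weightCount_truncatedInitialExponents ha hW hE _ (τ := id)
    (degreePart_mono Set.inter_subset_left a) (fun u hu ↦ (mem_degreePart.mp hu).1.2) ?_ ?_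
  · exact fun u _ ↦ coeff_self_transvection_ne_zero h u
  · intro u _ v _ huv hle
    exact ((eq_or_weight_lt_of_coeff_transvection_ne_zero hpq h huv).resolve_right
      hle.not_gt).symm

lemma weightCount_lt_truncatedInitialExponents [CharZero K] {u : Fin n →₀ ℕ} (ha : u.degree ≤ d)
    (hW : Set.InjOn (Finsupp.weight W) {m | m.degree = u.degree}) (hE : IsUpperSet E)
    (hpq : W q < W p) (h : p ≠ q) (hu : u ∈ E) (huq : u q ≠ 0) (hnot : transfer u q p 1 ∉ E) :
    weightCount W E u.degree (Finsupp.weight W (transfer u q p 1)) <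
      weightCount W (truncatedInitialExponents W d
        (movedMonomialIdeal K hE (Matrix.SpecialLinearGroup.transvection h (1 : K)))) u.degree
        (Finsupp.weight W (transfer u q p 1)) := by
  set s := Finsupp.weight W (transfer u q p 1) with hs
  set T := degreePart (E ∩ {m | s ≤ Finsupp.weight W m}) u.degree
  have hlt : Finsupp.weight W u < s := by
    have := weight_transfer W p (Nat.one_le_iff_ne_zero.mpr huq)
    omega
  have hT : ∀ v ∈ T, v ∈ E ∧ s ≤ Finsupp.weight W v := fun v hv ↦ (mem_degreePart.mp hv).1
  have huT : u ∉ T := fun hmem ↦ (hT u hmem).2.not_gt hlt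
  have hne : ∀ v ∈ T, v ≠ u := fun v hv hvu ↦ huT (hvu ▸ hv)
  have hsub : insert u T ⊆ degreePart E u.degree := Finset.insert_subset
    (mem_degreePart.mpr ⟨hu, rfl⟩) (degreePart_mono Set.inter_subset_left _)
  rw [weightCount, ← Nat.add_one_le_iff, ← Finset.card_insert_of_notMem huT]
  refine card_le_weightCount_truncatedInitialExponents ha hW hE _
    (τ := Function.update id u (transfer u q p 1)) hsub ?_ ?_ ?_
  · refine (Finset.forall_mem_insert _ _ _).mpr ⟨by rw [Function.update_self], fun v hv ↦ ?_⟩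
    rw [Function.update_of_ne (hne v hv)]
    exact (hT v hv).2
  · refine (Finset.forall_mem_insert _ _ _).mpr ⟨?_, fun v hv ↦ ?_⟩
    · rw [Function.update_self, coeff_transfer_transvection h u (Nat.one_le_iff_ne_zero.mpr huq)]
      simpa using huq
    · rw [Function.update_of_ne (hne v hv)]
      exact coeff_self_transvection_ne_zero h v
  · intro v hv v' hv' hcoeff hle
    rcases Finset.mem_insert.mp hv' with rfl | hv'
    · by_contra hvv'
      have hvT := (Finset.mem_insert.mp hv).resolve_left hvv'
      rw [Function.update_self] at hcoeff
      rcases eq_or_weight_lt_of_coeff_transvection_ne_zero hpq h hcoeff with heq | hlt'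
      · exact hnot (heq ▸ (hT v hvT).1)
      · exact (hT v hvT).2.not_gt hlt'
    · rw [Function.update_of_ne (hne v' hv')] at hcoeff
      exact ((eq_or_weight_lt_of_coeff_transvection_ne_zero hpq h hcoeff).resolve_right
        hle.not_gt).symm

/-- The degeneration maximizing the weight counts is strongly stable, as otherwise a transvection
followed by taking initial exponents would increase them. -/
lemma exists_isStronglyStable_isDegeneration [CharZero K] (W : Fin n → ℕ)
    (hW : ∀ a ≤ d, Set.InjOn (Finsupp.weight W) {m | m.degree = a}) (I : Ideal (PS K n)) :
    ∃ E, IsStronglyStable (fun p q ↦ W q < W p) E ∧ IsDegeneration I d E := by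
  obtain ⟨E, hE, hmax⟩ := (finite_setOf_isDegeneration I d).exists_maximalFor
    (fun E (a : Set.Iic d) ↦ weightCount W E a) _ ⟨_, isDegeneration_truncatedInitialExponents hW I⟩
  refine ⟨E, fun u hu p q hpq huq ↦ ?_, hE⟩
  have h : p ≠ q := ne_of_apply_ne W hpq.ne'
  rcases lt_or_ge d u.degree with hd | hd
  · exact hE.mem_of_lt _ (by rwa [degree_transfer p (Nat.one_le_iff_ne_zero.mpr huq)])
  by_contra hnot
  exact (weightCount_lt_truncatedInitialExponents hd (hW _ hd) hE.isUpperSet hpq h hu huq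
    hnot).not_ge (hmax (hE.truncatedInitialExponents_moved hW _)
      (fun a ↦ weightCount_le_truncatedInitialExponents a.2 (hW _ a.2) hE.isUpperSet hpq h)
      ⟨_, hd⟩ _)

end StableDegenerations

section ProductsOfDegenerations

open scoped Pointwise

variable {K n} {I J : Ideal (PS K n)} {d : ℕ} {E F : Set (Fin n →₀ ℕ)}

variable (K) in
lemma attainsRank_monomialsOfDegree (E F : Set (Fin n →₀ ℕ)) (d : ℕ) :
    AttainsRank (monomialsOfDegree K E) (monomialsOfDegree K F) d (degreePart (E + F) d).card := by
  let m := (degreePart (E + F) d).equivFin.symm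
  refine ⟨1, fun i ↦ monomial (m i).1 1, (basisMonomials (Fin n) K).linearIndependent.comp _
    (Subtype.val_injective.comp m.injective), fun i ↦ ?_⟩
  obtain ⟨⟨u, hu, v, hv, huv⟩, hd⟩ := mem_degreePart.mp (m i).2
  refine ⟨u.degree, v.degree, by rw [← hd, ← huv, map_add], _,
    ⟨u, mem_degreePart.mpr ⟨hu, rfl⟩, rfl⟩, _, ⟨v, mem_degreePart.mpr ⟨hv, rfl⟩, rfl⟩, ?_⟩
  rw [coordChange_one, AlgHom.id_apply, monomial_mul, one_mul]
  exact congrArg (monomial · 1) huv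

lemma IsDegeneration.attainsRank_card_add (hE : IsDegeneration I d E) (hF : IsDegeneration J d F) :
    AttainsRank (fun a ↦ (gradedPiece I a : Set (PS K n)))
      (fun b ↦ (gradedPiece J b : Set (PS K n))) d
      (degreePart (E + F) d).card :=
  hE.attainsRank _ _ (hF.attainsRank _ _ (attainsRank_monomialsOfDegree K E F d).symm).symm

lemma exists_isStronglyStable_isDegeneration_perm [CharZero K] (I : Ideal (PS K n)) (d : ℕ)
    (π : Equiv.Perm (Fin n)) :
    ∃ E, IsStronglyStable (fun p q ↦ π q < π p) E ∧ IsDegeneration I d E := by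
  obtain ⟨E, hE, hIE⟩ := exists_isStronglyStable_isDegeneration (fun i ↦ (d + 2) ^ (π i : ℕ))
    (fun a ha ↦ injOn_weight_pow (Nat.lt_succ_of_le (Nat.le_succ_of_le ha)) π) I
  exact ⟨E, fun u hu p q hpq ↦ hE u hu p q (Nat.pow_lt_pow_right (by omega) hpq), hIE⟩

lemma exists_isStronglyStable_lt_isDegeneration [CharZero K] (I : Ideal (PS K n)) (d : ℕ) :
    ∃ E, IsStronglyStable (· < ·) E ∧ IsDegeneration I d E := by
  simpa only [Fin.revPerm_apply, Fin.rev_lt_rev] using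
    exists_isStronglyStable_isDegeneration_perm I d Fin.revPerm

lemma exists_isStronglyStable_gt_isDegeneration [CharZero K] (I : Ideal (PS K n)) (d : ℕ) :
    ∃ E, IsStronglyStable (· > ·) E ∧ IsDegeneration I d E :=
  exists_isStronglyStable_isDegeneration_perm I d 1

end ProductsOfDegenerations

section GenericProduct

variable {K n}

/-- Evaluation of polynomials in the matrix entries at `g`. -/
def evalEntries (g : GL (Fin n) K) : MvPolynomial (Fin n × Fin n) K →+* K :=
  eval fun p ↦ (g : Matrix (Fin n) (Fin n) K) p.1 p.2

variable (K n) in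
/-- The change of coordinates given by a matrix of indeterminates. -/
def genericCoordChange : PS K n →+* MvPolynomial (Fin n) (MvPolynomial (Fin n × Fin n) K) :=
  eval₂Hom (C.comp C) fun i ↦ ∑ j, C (X (j, i)) * X j

/-- The product of `I` and the image of `J` under the generic change of coordinates. -/
def genericProduct (I J : Ideal (PS K n)) :
    Ideal (MvPolynomial (Fin n) (MvPolynomial (Fin n × Fin n) K)) :=
  I.map (MvPolynomial.map C) * J.map (genericCoordChange K n)

lemma map_evalEntries_comp_map_C (g : GL (Fin n) K) :
    (MvPolynomial.map (evalEntries g)).comp (MvPolynomial.map C) = RingHom.id (PS K n) :=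
  ringHom_ext (fun r ↦ by simp [evalEntries]) fun i ↦ by simp

lemma map_evalEntries_comp_genericCoordChange (g : GL (Fin n) K) :
    (MvPolynomial.map (evalEntries g)).comp (genericCoordChange K n) =
      (coordChange K n g : PS K n →+* PS K n) := by
  refine ringHom_ext (fun r ↦ ?_) fun i ↦ ?_
  · simp [genericCoordChange, evalEntries, coordChange, algebraMap_eq]
  · simp [genericCoordChange, evalEntries, coordChange_X, smul_eq_C_mul]

lemma map_evalEntries_genericProduct (I J : Ideal (PS K n)) (g : GL (Fin n) K) :
    (genericProduct I J).map (MvPolynomial.map (evalEntries g)) =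
      I * J.map (coordChange K n g) := by
  rw [genericProduct, Ideal.map_mul, Ideal.map_map, Ideal.map_map, map_evalEntries_comp_map_C,
    map_evalEntries_comp_genericCoordChange, Ideal.map_id]
  rfl

lemma isHomogeneous_genericCoordChange {d : ℕ} {f : PS K n} (hf : f.IsHomogeneous d) :
    (genericCoordChange K n f).IsHomogeneous d := by
  have h := hf.eval₂ (C.comp C) (fun i ↦ ∑ j, C (X (j, i)) * X j)
    (fun r ↦ isHomogeneous_C (Fin n) (C r : MvPolynomial (Fin n × Fin n) K))
    fun i ↦ .sum _ _ 1 fun j _ ↦ (isHomogeneous_X _ j).C_mul _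
  exact (one_mul d) ▸ h

lemma map_C_mul_genericCoordChange_mem_gradedPiece {I J : Ideal (PS K n)} {a b : ℕ} {p q : PS K n}
    (hp : p ∈ gradedPiece I a) (hq : q ∈ gradedPiece J b) :
    map C p * genericCoordChange K n q ∈ gradedPiece (genericProduct I J) (a + b) :=
  mem_gradedPiece.mpr
    ⟨Ideal.mul_mem_mul (Ideal.mem_map_of_mem _ hp.1) (Ideal.mem_map_of_mem _ hq.1),
      (hp.2.map C).mul (isHomogeneous_genericCoordChange hq.2)⟩

lemma AttainsRank.le_card_initialExponents_genericProduct {Γ : Type*} [AddCommMonoid Γ]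
    [LinearOrder Γ] {w : (Fin n →₀ ℕ) →+ Γ} {I J : Ideal (PS K n)} {d r : ℕ}
    (hw : Set.InjOn w {m | m.degree = d})
    (h : AttainsRank (fun a ↦ (gradedPiece I a : Set (PS K n)))
      (fun b ↦ (gradedPiece J b : Set (PS K n))) d r) :
    r ≤ (degreePart (initialExponents w (genericProduct I J)) d).card := by
  obtain ⟨g, v, hv, hmem⟩ := h
  choose a b hab p hp q hq hpq using hmem
  let P i := map C (p i) * genericCoordChange K n (q i)
  have hP : ∀ i, map (evalEntries g) (P i) = v i := fun i ↦ by
    rw [map_mul, ← hpq i]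
    exact congrArg₂ (· * ·) (RingHom.congr_fun (map_evalEntries_comp_map_C g) (p i))
      (RingHom.congr_fun (map_evalEntries_comp_genericCoordChange g) (q i))
  have hPv : LinearIndependent K fun i ↦ map (evalEntries g) (P i) := by simpa only [hP] using hv
  obtain ⟨δ, hδ, hli⟩ :=
    exists_forall_linearIndependent_map (B := MvPolynomial (Fin n × Fin n) K) (evalEntries g) hPv
  have hPli := hli (RingHom.id _) (ne_zero_of_map hδ)
  simp only [MvPolynomial.map_id] at hPli
  simpa using card_le_card_initialExponents_of_linearIndependent hw
    (fun i ↦ hab i ▸ map_C_mul_genericCoordChange_mem_gradedPiece (hp i) (hq i)) hPli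

variable (n) in
/-- The lexicographic order as a monomial order. -/
def lexHom : (Fin n →₀ ℕ) →+ Lex (Fin n →₀ ℕ) := (toLexAddEquiv (Fin n →₀ ℕ)).toAddMonoidHom

lemma injOn_lexHom (s : Set (Fin n →₀ ℕ)) : s.InjOn (lexHom n) :=
  (toLexAddEquiv (Fin n →₀ ℕ)).injective.injOn

lemma generally_le_hilb_product (I J : Ideal (PS K n)) :
    generally K n fun g ↦ ∀ d r,
      AttainsRank (fun a ↦ (gradedPiece I a : Set (PS K n)))
        (fun b ↦ (gradedPiece J b : Set (PS K n))) d r →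
        r ≤ hilb K n (I * J.map (coordChange K n g)) d := by
  obtain ⟨δ, hδ, h⟩ := exists_initialExponents_subset_map K (lexHom n) (genericProduct I J)
  refine ⟨δ, hδ, fun g hg d r hr ↦ ?_⟩
  calc r ≤ (degreePart (initialExponents (lexHom n) (genericProduct I J)) d).card :=
        hr.le_card_initialExponents_genericProduct (injOn_lexHom _)
    _ ≤ (degreePart (initialExponents (lexHom n) (I * J.map (coordChange K n g))) d).card := by
        rw [← map_evalEntries_genericProduct]
        exact Finset.card_le_card (degreePart_mono (h (evalEntries g) hg) d)
    _ = hilb K n (I * J.map (coordChange K n g)) d :=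
        card_initialExponents_eq_finrank _ (injOn_lexHom _)

end GenericProduct

section MonomialIdeals

open scoped Pointwise

variable {K n} {I J : Ideal (PS K n)}

lemma expDeg_eq_degree (m : Fin n →₀ ℕ) : expDeg n m = m.degree := (Finsupp.degree_eq_sum m).symm

lemma IsLexIdeal.isLexSet_exponents (hI : IsLexIdeal K n I) :
    IsLexSet (· < ·) (exponents I) := fun u hu v huv ↦
  hI.2 u v (by simpa only [expDeg_eq_degree] using huv) hu

lemma IsOplexIdeal.isLexSet_exponents (hI : IsOplexIdeal K n I) :
    IsLexSet (· > ·) (exponents I) := fun u hu v huv ↦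
  hI.2 u v (by simpa only [expDeg_eq_degree] using huv) hu

lemma card_degreePart_exponents_le_hilb (I : Ideal (PS K n)) (d : ℕ) :
    (degreePart (exponents I) d).card ≤ hilb K n I d := by
  have hsub : exponents I ⊆ initialExponents (lexHom n) I := fun m hm ↦
    ⟨monomial m 1, ⟨hm, isHomogeneous_monomial 1 rfl⟩, isLeadingExponent_monomial _ m⟩
  exact (Finset.card_le_card (degreePart_mono hsub d)).trans_eq
    (card_initialExponents_eq_finrank I (injOn_lexHom _))

lemma hilb_mul_le_card_degreePart_add (hI : IsMonomialIdeal K n I) (hJ : IsMonomialIdeal K n J)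
    (d : ℕ) : hilb K n (I * J) d ≤ (degreePart (exponents I + exponents J) d).card := by
  have hup : IsUpperSet (exponents I + exponents J) := isUpperSet_add (isUpperSet_exponents I)
  have hIJ : I * J ≤ restrictSupportIdeal K _ hup := Ideal.mul_le.mpr fun f hf g hg ↦
    (restrictSupport_add K _ _).ge (Submodule.mul_mem_mul (hI f hf) (hJ g hg))
  have hspan : gradedPiece (I * J) d ≤ Submodule.span K (monomialsOfDegree K _ d) := fun f hf ↦
    gradedPiece_restrictSupportIdeal_le hup d ⟨hIJ hf.1, hf.2⟩
  have hfin : (monomialsOfDegree K (exponents I + exponents J) d).Finite :=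
    (Finset.finite_toSet _).image _
  have := FiniteDimensional.span_of_finite K hfin
  calc hilb K n (I * J) d
      ≤ Module.finrank K (Submodule.span K (monomialsOfDegree K (exponents I + exponents J) d)) :=
        Submodule.finrank_mono hspan
    _ ≤ (degreePart (exponents I + exponents J) d).card := by
        classical
        rw [monomialsOfDegree, ← Finset.coe_image]
        exact (finrank_span_finset_le_card _).trans Finset.card_image_le

end MonomialIdeals

theorem hilb_general_product_ge_lex_general [CharZero K] (I J Ilex Jop : Ideal (PS K n))
    (hIlex : IsLexIdeal K n Ilex) (hIlexHilb : ∀ d, hilb K n Ilex d ≤ hilb K n I d)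
    (hJop : IsOplexIdeal K n Jop) (hJopHilb : ∀ d, hilb K n Jop d ≤ hilb K n J d) :
    generally K n fun g ↦ ∀ d,
      hilb K n (Ilex * Jop) d ≤ hilb K n (I * J.map (coordChange K n g)) d := by
  obtain ⟨δ, hδ, h⟩ := generally_le_hilb_product I J
  refine ⟨δ, hδ, fun g hg d ↦ ?_⟩
  obtain ⟨E, hE, hIE⟩ := exists_isStronglyStable_lt_isDegeneration I d
  obtain ⟨F, hF, hJF⟩ := exists_isStronglyStable_gt_isDegeneration J d
  have hLE : ∀ a ≤ d, (degreePart (exponents Ilex) a).card ≤ (degreePart E a).card := fun a ha ↦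
    (card_degreePart_exponents_le_hilb Ilex a).trans ((hIlexHilb a).trans (hIE.hilb_le a ha))
  have hMF : ∀ a ≤ d, (degreePart (exponents Jop) a).card ≤ (degreePart F a).card := fun a ha ↦
    (card_degreePart_exponents_le_hilb Jop a).trans ((hJopHilb a).trans (hJF.hilb_le a ha))
  refine (hilb_mul_le_card_degreePart_add hIlex.1 hJop.1 d).trans <|
    (card_degreePart_lex_add_oplex_le hE hIE.isUpperSet hF hJF.isUpperSet
      hIlex.isLexSet_exponents (isUpperSet_exponents Ilex) hJop.isLexSet_exponents
      (isUpperSet_exponents Jop) hLE hMF).trans ?_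
  exact h g hg d _ (hIE.attainsRank_card_add hJF)

/-- **Theorem 1.4** (Caviglia–Murai): suppose `char K = 0`.  Let `I, J ⊆ S` be homogeneous
ideals.  For a general change of coordinates `g ∈ GL_n(K)`,
`H(I·g(J), d) ≥ H(I^lex · J^oplex, d)` for all `d ≥ 0`. -/
theorem hilb_general_product_ge_lex [CharZero K]
    (I J : Ideal (PS K n)) (hI : IsHomog K n I) (hJ : IsHomog K n J)
    (Ilex : Ideal (PS K n)) (hIlex : IsLexIdeal K n Ilex)
    (hIlexHilb : ∀ d : ℕ, hilb K n Ilex d = hilb K n I d)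
    (Jop : Ideal (PS K n)) (hJop : IsOplexIdeal K n Jop)
    (hJopHilb : ∀ d : ℕ, hilb K n Jop d = hilb K n J d)
 :
    generally K n (fun g => ∀ d : ℕ,
      hilb K n (Ilex * Jop) d ≤ hilb K n (I * Ideal.map (coordChange K n g) J) d) := by
  exact hilb_general_product_ge_lex_general K n I J Ilex Jop hIlex (fun d ↦ (hIlexHilb d).le) hJop
    fun d ↦ (hJopHilb d).le

end
end

section
/- Let K be a field of characteristic 0 and S = K[x_1,...,x_n]. Let I ⊆ S be a 0-Borel (strongly stable) monomial ideal and P ⊆ S an opposite 0-Borel monomial ideal with minimal monomial generating set G(P) = {u_1,...,u_s}. Then, as a K-vector space, the product ideal IP decomposes as the direct sum IP = ⊕_{i=1}^s (I_{(≤ min u_i)})·u_i. -/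
open MvPolynomial TensorProduct CategoryTheory

noncomputable section

variable (K : Type) [Field K] (n : ℕ)

/-- A 0-Borel (strongly stable) monomial ideal: for every monomial `u·x_j ∈ I` and every
`i < j`, also `u·x_i ∈ I`. -/
def IsZeroBorel (I : Ideal (PS K n)) : Prop :=
  IsMonomialIdeal K n I ∧ ∀ m : Fin n →₀ ℕ, MvPolynomial.monomial m (1 : K) ∈ I →
    ∀ i j : Fin n, i < j → m j ≠ 0 →
      MvPolynomial.monomial (m + Finsupp.single i 1 - Finsupp.single j 1) (1 : K) ∈ I

/-- An opposite 0-Borel monomial ideal: for every monomial `u·x_j ∈ I` and every `j < i`,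
also `u·x_i ∈ I`. -/
def IsOpZeroBorel (I : Ideal (PS K n)) : Prop :=
  IsMonomialIdeal K n I ∧ ∀ m : Fin n →₀ ℕ, MvPolynomial.monomial m (1 : K) ∈ I →
    ∀ i j : Fin n, j < i → m j ≠ 0 →
      MvPolynomial.monomial (m + Finsupp.single i 1 - Finsupp.single j 1) (1 : K) ∈ I

/-- `max u`: the largest index of a variable dividing the monomial `X^u`
(with `max 1 = 1`, i.e. index `0`). -/
def maxVar (m : Fin n →₀ ℕ) : ℕ := m.support.sup (fun i => (i : ℕ))

/-- `min u`: the smallest index of a variable dividing the monomial `X^u`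
(with `min 1 = n`, i.e. index `n - 1`). -/
def minVar (m : Fin n →₀ ℕ) : ℕ := n - 1 - m.support.sup (fun i => n - 1 - (i : ℕ))

/-- The `K`-subspace `I_{(≤ k)} · X^u` of `S`: the span of the monomials `X^m · X^u` with
`X^m ∈ I` and `max X^m ≤ k`. -/
def truncMulSub (I : Ideal (PS K n)) (k : ℕ) (u : Fin n →₀ ℕ) : Submodule K (PS K n) :=
  Submodule.span K {f | ∃ m : Fin n →₀ ℕ, MvPolynomial.monomial m (1 : K) ∈ I ∧
    maxVar n m ≤ k ∧ f = MvPolynomial.monomial (m + u) (1 : K)}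

/-!
Read monomials as exponent vectors. Among all factorizations of a monomial of `IP` as `a * b` with
`a ∈ I` and `b ∈ P`, choose the one whose `b` is lexicographically smallest. Moving a factor from
`b` to `a` makes `b` smaller, so `b` is a minimal generator of `P`. If `max a > min b`, exchanging
the variables `x_{max a}` and `x_{min b}` between `a` and `b` also makes `b` smaller, while
(opposite) stability keeps the factors in `I` and `P`; hence `max a ≤ min b`.

Conversely, two factorizations `m * u = m' * u'` with `max m ≤ min u` and `max m' ≤ min u'` are
both cuts of the same sorted word, so one of `u`, `u'` divides the other.
-/

section Exponents

variable {σ ι : Type*} {A B : Set (σ →₀ ℕ)} {m m' u u' a b : σ →₀ ℕ} {p q : σ}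

theorem exists_eq_add_single_one (hq : q ∈ a.support) : ∃ c, a = c + Finsupp.single q 1 :=
  le_iff_exists_add'.mp (by simpa [Nat.one_le_iff_ne_zero] using hq)

theorem exchange_add_exchange (hq : q ∈ a.support) (hp : p ∈ b.support) :
    (a + Finsupp.single p 1 - Finsupp.single q 1) +
      (b + Finsupp.single q 1 - Finsupp.single p 1) = a + b := by
  obtain ⟨c, rfl⟩ := exists_eq_add_single_one hq
  obtain ⟨d, rfl⟩ := exists_eq_add_single_one hp
  rw [add_right_comm c, add_right_comm d, add_tsub_cancel_right, add_tsub_cancel_right]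
  abel

variable [LinearOrder σ]

/-- The relation `max m ≤ min u` between monomials, stated on supports so that it needs no
convention for the monomial `1`. -/
def SupportLE (m u : σ →₀ ℕ) : Prop := ∀ q ∈ m.support, ∀ p ∈ u.support, q ≤ p

/-- A stable set of exponents (Eliahou–Kervaire): only the variable `x_{max m}` of a monomial `m`
has to be replaceable by smaller ones, in contrast to strongly stable sets. -/
def IsStableSet (A : Set (σ →₀ ℕ)) : Prop :=
  ∀ m ∈ A, ∀ i j : σ, i < j → IsGreatest (m.support : Set σ) j →
    m + Finsupp.single i 1 - Finsupp.single j 1 ∈ A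

/-- An opposite stable set of exponents: `IsStableSet` for the reversed order of the variables. -/
def IsOpStableSet (B : Set (σ →₀ ℕ)) : Prop :=
  ∀ m ∈ B, ∀ i j : σ, j < i → IsLeast (m.support : Set σ) j →
    m + Finsupp.single i 1 - Finsupp.single j 1 ∈ B

/-- The exponents of the monomials `m * u` with `m` in `A` and `max m ≤ min u`, i.e. of the
monomials in the summand `I_{(≤ min u)} · u`. -/
def truncTranslate (A : Set (σ →₀ ℕ)) (u : σ →₀ ℕ) : Set (σ →₀ ℕ) :=
  (· + u) '' {m ∈ A | SupportLE m u}

theorem SupportLE.le_or_le (h : SupportLE m u) (h' : SupportLE m' u') (heq : m + u = m' + u') :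
    u ≤ u' ∨ u' ≤ u := by
  by_contra! hne
  obtain ⟨p, hp⟩ := not_forall.mp hne.1
  obtain ⟨q, hq⟩ := not_forall.mp hne.2
  have heq_p : m p + u p = m' p + u' p := DFunLike.congr_fun heq p
  have heq_q : m q + u q = m' q + u' q := DFunLike.congr_fun heq q
  have hqp : q ≤ p :=
    h q (Finsupp.mem_support_iff.mpr (by lia)) p (Finsupp.mem_support_iff.mpr (by lia))
  have hpq : p ≤ q :=
    h' p (Finsupp.mem_support_iff.mpr (by lia)) q (Finsupp.mem_support_iff.mpr (by lia))
  obtain rfl := le_antisymm hqp hpq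
  lia

theorem pairwise_disjoint_truncTranslate {u : ι → σ →₀ ℕ}
    (hu : ∀ i j, i ≠ j → ¬ u i ≤ u j) :
    Pairwise (Function.onFun Disjoint fun i => truncTranslate A (u i)) := by
  refine fun i j hij => Set.disjoint_left.mpr ?_
  rintro _ ⟨m, ⟨-, hm⟩, rfl⟩ ⟨m', ⟨-, hm'⟩, heq⟩
  exact (hm'.le_or_le hm heq).elim (hu j i hij.symm) (hu i j hij)

theorem toLex_add_single_sub_single_lt (hp : p ∈ b.support) (hpq : p < q) :
    toLex (b + Finsupp.single q 1 - Finsupp.single p 1) < toLex b := by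
  obtain ⟨c, rfl⟩ := exists_eq_add_single_one hp
  rw [add_right_comm, add_tsub_cancel_right]
  exact add_lt_add_right (Finsupp.Lex.single_lt_iff.mpr hpq) (toLex c)

theorem IsStableSet.exists_supportLE_of_mem_add (hA : IsUpperSet A) (hAs : IsStableSet A)
    (hBs : IsOpStableSet B) (ha : a ∈ A) (hb : b ∈ B) :
    ∃ m ∈ A, ∃ u, Minimal (· ∈ B) u ∧ SupportLE m u ∧ m + u = a + b := by
  classical
  obtain ⟨⟨m, u⟩, hmu, hlex⟩ := Finset.exists_min_image
    {x ∈ Finset.HasAntidiagonal.antidiagonal (a + b) | x.1 ∈ A ∧ x.2 ∈ B} (fun x => toLex x.2)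
    ⟨(a, b), by simp [ha, hb]⟩
  obtain ⟨hsum, hm, hu⟩ : m + u = a + b ∧ m ∈ A ∧ u ∈ B := by simpa using hmu
  have hleast : ∀ m' ∈ A, ∀ u' ∈ B, m' + u' = m + u → toLex u ≤ toLex u' :=
    fun m' hm' u' hu' h => hlex (m', u') (by simp [hm', hu', h, hsum])
  refine ⟨m, hm, u, ⟨hu, fun v hv hvu => ?_⟩, fun q hq p hp => ?_, hsum⟩
  · obtain ⟨c, rfl⟩ := exists_add_of_le hvu
    have hle := hleast (m + c) (hA le_self_add hm) v hv (by abel)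
    exact (toLex.injective (hle.antisymm (Finsupp.toLex_monotone hvu))).le
  · by_contra! hpq
    set r := m.support.max' ⟨q, hq⟩
    set t := u.support.min' ⟨p, hp⟩
    have hr : IsGreatest (m.support : Set σ) r := m.support.isGreatest_max' _
    have ht : IsLeast (u.support : Set σ) t := u.support.isLeast_min' _
    have htr : t < r := (ht.2 hp).trans_lt (hpq.trans_le (hr.2 hq))
    exact (toLex_add_single_sub_single_lt ht.1 htr).not_ge
      (hleast _ (hAs m hm t r htr hr) _ (hBs u hu r t htr ht) (exchange_add_exchange hr.1 ht.1))

open scoped Pointwise in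
theorem iUnion_truncTranslate {u : ι → σ →₀ ℕ} (hA : IsUpperSet A) (hAs : IsStableSet A)
    (hu : IsOpStableSet (upperClosure (Set.range u) : Set (σ →₀ ℕ))) :
    ⋃ i, truncTranslate A (u i) = A + (upperClosure (Set.range u) : Set (σ →₀ ℕ)) := by
  have hmem : ∀ i, u i ∈ upperClosure (Set.range u) :=
    fun i => subset_upperClosure (Set.mem_range_self i)
  refine subset_antisymm (Set.iUnion_subset fun i => ?_) ?_
  · rintro _ ⟨m, ⟨hm, -⟩, rfl⟩
    exact Set.add_mem_add hm (hmem i)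
  · rintro _ ⟨a, ha, b, hb, rfl⟩
    obtain ⟨m, hm, v, hv, hmv, hsum⟩ := hAs.exists_supportLE_of_mem_add hA hu ha hb
    obtain ⟨_, ⟨i, rfl⟩, hle⟩ := mem_upperClosure.mp hv.prop
    obtain rfl : u i = v := hle.antisymm (hv.le_of_le (hmem i) hle)
    exact Set.mem_iUnion.mpr ⟨i, m, ⟨hm, hmv⟩, hsum⟩

end Exponents

section RestrictSupport

variable {σ R : Type*} {ι : Sort*} [CommSemiring R]

theorem restrictSupport_iUnion (s : ι → Set (σ →₀ ℕ)) :
    restrictSupport R (⋃ i, s i) = ⨆ i, restrictSupport R (s i) := by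
  simp only [restrictSupport_eq_span, Set.image_iUnion, Submodule.span_iUnion]

theorem disjoint_restrictSupport {s t : Set (σ →₀ ℕ)} (h : Disjoint s t) :
    Disjoint (restrictSupport R s) (restrictSupport R t) := by
  rw [Submodule.disjoint_def]
  intro f hs ht
  rw [← support_eq_empty, ← Finset.coe_eq_empty]
  exact Set.subset_empty_iff.mp (h hs ht)

theorem iSupIndep_restrictSupport {ι : Type*} {s : ι → Set (σ →₀ ℕ)}
    (h : Pairwise (Function.onFun Disjoint s)) : iSupIndep fun i => restrictSupport R (s i) := by
  refine fun i => ?_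
  simp only [← restrictSupport_iUnion]
  exact disjoint_restrictSupport <| Set.disjoint_iUnion₂_right.mpr fun j hj => h hj.symm

/-- The exponents of the monomials contained in an ideal. -/
def monomialExponents (I : Ideal (MvPolynomial σ R)) : Set (σ →₀ ℕ) := {m | monomial m 1 ∈ I}

theorem isUpperSet_monomialExponents (I : Ideal (MvPolynomial σ R)) :
    IsUpperSet (monomialExponents I) := by
  rintro a b hab ha
  exact I.mem_of_dvd (monomial_dvd_monomial.mpr ⟨Or.inr hab, dvd_rfl⟩) ha

theorem restrictScalars_eq_restrictSupport_monomialExponents {I : Ideal (MvPolynomial σ R)}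
    (hI : ∀ f ∈ I, ∀ m ∈ f.support, monomial m 1 ∈ I) :
    I.restrictScalars R = restrictSupport R (monomialExponents I) := by
  refine le_antisymm hI ?_
  rw [restrictSupport_eq_span, Submodule.span_le]
  rintro _ ⟨m, hm, rfl⟩
  exact hm

theorem restrictScalars_span_range_monomial (u : ι → σ →₀ ℕ) :
    (Ideal.span (Set.range fun i => monomial (u i) (1 : R))).restrictScalars R =
      restrictSupport R (upperClosure (Set.range u) : Set (σ →₀ ℕ)) := by
  ext f
  rw [Submodule.restrictScalars_mem, Set.range_comp' (monomial · (1 : R)) u,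
    mem_ideal_span_monomial_image]
  rfl

theorem monomialExponents_span_range_monomial [Nontrivial R] (u : ι → σ →₀ ℕ) :
    monomialExponents (Ideal.span (Set.range fun i => monomial (u i) (1 : R))) =
      (upperClosure (Set.range u) : Set (σ →₀ ℕ)) := by
  ext m
  rw [monomialExponents, Set.mem_ofPred_eq, ← Submodule.restrictScalars_mem R,
    restrictScalars_span_range_monomial, monomial_mem_restrictSupport]
  simp

end RestrictSupport

theorem product_decomposition_of_borel_general {σ ι R : Type*} [LinearOrder σ] [CommSemiring R]
    [Nontrivial R] (I P : Ideal (MvPolynomial σ R))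
    (hI : ∀ f ∈ I, ∀ m ∈ f.support, monomial m 1 ∈ I) (hIs : IsStableSet (monomialExponents I))
    (hPs : IsOpStableSet (monomialExponents P)) (u : ι → σ →₀ ℕ)
    (hgen : P = Ideal.span (Set.range fun i => monomial (u i) (1 : R)))
    (hmin : ∀ i j, i ≠ j → ¬ u i ≤ u j) :
    iSupIndep (fun i => restrictSupport R (truncTranslate (monomialExponents I) (u i))) ∧
      ⨆ i, restrictSupport R (truncTranslate (monomialExponents I) (u i)) =
        (I * P).restrictScalars R := by
  refine ⟨iSupIndep_restrictSupport (pairwise_disjoint_truncTranslate hmin), ?_⟩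
  subst hgen
  rw [monomialExponents_span_range_monomial] at hPs
  rw [← restrictSupport_iUnion, iUnion_truncTranslate (isUpperSet_monomialExponents I) hIs hPs,
    restrictSupport_add, ← restrictScalars_eq_restrictSupport_monomialExponents hI,
    ← restrictScalars_span_range_monomial, Submodule.restrictScalars_mul]

section Borel

variable {K n} {I : Ideal (PS K n)}

theorem IsZeroBorel.isStableSet (hI : IsZeroBorel K n I) : IsStableSet (monomialExponents I) :=
  fun m hm i j hij hj => hI.2 m hm i j hij (Finsupp.mem_support_iff.mp hj.1)

theorem IsOpZeroBorel.isOpStableSet (hI : IsOpZeroBorel K n I) :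
    IsOpStableSet (monomialExponents I) :=
  fun m hm i j hij hj => hI.2 m hm i j hij (Finsupp.mem_support_iff.mp hj.1)

theorem maxVar_le_minVar_iff {m u : Fin n →₀ ℕ} : maxVar n m ≤ minVar n u ↔ SupportLE m u := by
  have le_minVar_iff (q : Fin n) : (q : ℕ) ≤ minVar n u ↔ ∀ p ∈ u.support, q ≤ p := by
    have hsup : u.support.sup (fun i => n - 1 - (i : ℕ)) ≤ n - 1 :=
      Finset.sup_le fun _ _ => Nat.sub_le _ _
    have hq : (q : ℕ) ≤ minVar n u ↔
        u.support.sup (fun i => n - 1 - (i : ℕ)) ≤ n - 1 - (q : ℕ) := by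
      unfold minVar
      lia
    rw [hq, Finset.sup_le_iff]
    exact forall₂_congr fun p _ => by rw [Fin.le_def]; lia
  simp only [maxVar, Finset.sup_le_iff, le_minVar_iff, SupportLE]

theorem truncMulSub_minVar (u : Fin n →₀ ℕ) :
    truncMulSub K n I (minVar n u) u =
      restrictSupport K (truncTranslate (monomialExponents I) u) := by
  rw [restrictSupport_eq_span, truncTranslate, Set.image_image, truncMulSub]
  congr 1
  ext f
  simp [maxVar_le_minVar_iff, monomialExponents, and_assoc, eq_comm]

end Borel

/-- **Lemma 3.4** (Caviglia–Murai): let `char K = 0`, `I ⊆ S` a 0-Borel (strongly stable)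
ideal and `P ⊆ S` an opposite 0-Borel ideal with minimal monomial generators
`G(P) = {u_1, …, u_s}`.  Then, as a `K`-vector space, `IP` is the direct sum
`IP = ⊕_{i=1}^s (I_{(≤ min u_i)}) · u_i`. -/
theorem product_decomposition_of_borel [CharZero K]
    (I P : Ideal (PS K n)) (hI : IsZeroBorel K n I) (hP : IsOpZeroBorel K n P)
    (s : ℕ) (u : Fin s → (Fin n →₀ ℕ))
    (hgen : P = Ideal.span (Set.range (fun i => MvPolynomial.monomial (u i) (1 : K))))
    (hmin : ∀ i j : Fin s, i ≠ j → ¬ u i ≤ u j) :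
    iSupIndep (fun i : Fin s => truncMulSub K n I (minVar n (u i)) (u i)) ∧
      (⨆ i : Fin s, truncMulSub K n I (minVar n (u i)) (u i)) =
        Submodule.restrictScalars K (I * P) := by
  simp only [truncMulSub_minVar]
  exact product_decomposition_of_borel_general I P hI.1 hI.isStableSet hP.isOpStableSet u hgen hmin

end
end
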